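/- arXiv:2007.14231 — 3 statements merged into one kernel-verified Lean document; each statement's English description precedes it below -/
import Mathlib

section
/- Let A, B, C ∈ ℝ² be affinely independent and let m ∈ ℝ² be a global minimizer of the area distance functional f₂ of the triangle ABC. Then the barycentric coordinates (λ₁, λ₂, λ₃) of m with respect to (A, B, C) satisfy λᵢ > 1/4 for every i, and moreover λ₁·λ₂ < 1/8, λ₂·λ₃ < 1/8 and λ₃·λ₁ < 1/8. (Equivalently, m lies inside the curvilinear triangle bounded by arcs of the three hyperbolas {λᵢ·λⱼ = 1/8}; the hyperbola λᵢ·λⱼ = 1/8 is centered at the vertex opposite to both coordinates i, j, has the two sides of ABC through that vertex as asymptotes, and is tangent to two medians of ABC.) -/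
/-!
At a minimizer `m` the gradient of the area distance functional vanishes: for every linear
functional `φ`, the integral over the triangle `T` of `φ (P - m) / ‖P - m‖` is zero
(`isCritical_of_forall_le`). This integrand is odd under the reflection in `m`, so its integral
over the centrally symmetric set `T ∩ (2 m - T)`, the core, vanishes, and hence so does its
integral over the rest of `T` (`integral_diff_core_eq_zero`). The rest consists of the corners
`λᵢ > 2 λᵢ(m)`, whose areas are `(1 - 2 λᵢ(m)) ^ 2` times that of `T`. Each bound follows by
choosing a `φ` for which this vanishing is impossible.

* If `λᵢ(m) ≤ 0`, then the linear part of `λᵢ` takes one sign on `T - m` (`IsCritical.coord_pos`).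
* If `λᵢ(m) ≥ 1 / 2`, only the two corners at the other vertices occur, and both lie on one side of
  the line through `m` whose chord in the angle at the `i`-th vertex has midpoint `m`
  (`IsCritical.coord_zero_lt`).
* If all `λᵢ(m)` are in `(0, 1 / 2)`, the three corners are disjoint. The line `λ₃ = 2 λ₃(m)` meets
  the two sides through the third vertex at points `m + u` and `m + v`; take the functional with
  `φ u = ‖u‖` and `φ v = ‖v‖`. The normalized functional exceeds `1` on the corner at the third
  vertex, by the strict triangle inequality, and is at least `-1` on the other two, so the third
  corner has smaller area than the other two together. This says exactly that
  `λ₁(m) λ₂(m) < 1 / 8` (`IsCritical.coord_mul_lt`).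

The bounds `λᵢ(m) < 1 / 2` and `λᵢ(m) λⱼ(m) < 1 / 8` give `λₖ(m) > 1 / 4` by algebra (`quarter_lt`).
-/

open MeasureTheory Metric Filter

noncomputable section

abbrev Plane := EuclideanSpace ℝ (Fin 2)

/-- The area distance functional of the triangle `ABC`: the integral of the distance
to `X` over the triangular region, with respect to 2-dimensional Lebesgue measure. -/
noncomputable def areaDist (A B C X : Plane) : ℝ :=
  ∫ P in convexHull ℝ ({A, B, C} : Set Plane), ‖P - X‖

/-! ### The triangle in barycentric coordinates -/

/-- The closed triangular region of an affine basis, cut out by its barycentric coordinates. -/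
def tri (b : AffineBasis (Fin 3) ℝ Plane) : Set Plane := {p | ∀ i, 0 ≤ b.coord i p}

/-- The part of the triangle beyond the line at barycentric level `c` parallel to the side
opposite to the vertex `b i`. -/
def corner (b : AffineBasis (Fin 3) ℝ Plane) (i : Fin 3) (c : ℝ) : Set Plane :=
  {p | p ∈ tri b ∧ c < b.coord i p}

/-- The intersection of the triangle with its mirror image in `m`. -/
def core (b : AffineBasis (Fin 3) ℝ Plane) (m : Plane) : Set Plane :=
  {p | ∀ i, 0 ≤ b.coord i p ∧ b.coord i p ≤ 2 * b.coord i m}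

/-- Vanishing at `m` of the formal gradient of the area distance functional: the unit vectors
from `m` to the points of the triangle average to zero, tested against linear functionals. The
point `m` itself, where the integrand is `0 / 0 = 0`, is a null set. -/
def IsCritical (b : AffineBasis (Fin 3) ℝ Plane) (m : Plane) : Prop :=
  ∀ φ : Plane →ₗ[ℝ] ℝ, ∫ p in tri b, φ (p - m) / ‖p - m‖ = 0

lemma continuous_coord (b : AffineBasis (Fin 3) ℝ Plane) (i : Fin 3) :
    Continuous (b.coord i) := (b.coord i).continuous_of_finiteDimensional

lemma tri_eq (b : AffineBasis (Fin 3) ℝ Plane) : tri b = convexHull ℝ (Set.range b) :=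
  b.convexHull_eq_nonneg_coord.symm

lemma isCompact_tri (b : AffineBasis (Fin 3) ℝ Plane) : IsCompact (tri b) := by
  rw [tri_eq]
  exact (Set.finite_range b).isCompact_convexHull ℝ

lemma volume_tri_ne_top (b : AffineBasis (Fin 3) ℝ Plane) : volume (tri b) ≠ ⊤ :=
  (isCompact_tri b).measure_lt_top.ne

lemma volume_tri_pos (b : AffineBasis (Fin 3) ℝ Plane) : 0 < volume (tri b) := by
  have h : (interior (tri b)).Nonempty := by
    rw [tri_eq]
    exact interior_convexHull_nonempty_iff_affineSpan_eq_top.2 b.tot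
  exact (isOpen_interior.measure_pos volume h).trans_le (measure_mono interior_subset)

lemma measurableSet_tri (b : AffineBasis (Fin 3) ℝ Plane) : MeasurableSet (tri b) :=
  (isCompact_tri b).measurableSet

lemma measurableSet_corner (b : AffineBasis (Fin 3) ℝ Plane) (i : Fin 3) (c : ℝ) :
    MeasurableSet (corner b i c) :=
  (measurableSet_tri b).inter
    (isOpen_lt continuous_const (continuous_coord b i)).measurableSet

lemma measurableSet_core (b : AffineBasis (Fin 3) ℝ Plane) (m : Plane) :
    MeasurableSet (core b m) := by
  have : core b m = ⋂ i, {p | 0 ≤ b.coord i p ∧ b.coord i p ≤ 2 * b.coord i m} := by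
    ext p; simp [core]
  rw [this]
  refine MeasurableSet.iInter fun i => ?_
  exact (isClosed_le continuous_const (continuous_coord b i)).measurableSet.inter
    (isClosed_le (continuous_coord b i) continuous_const).measurableSet

lemma core_subset_tri (b : AffineBasis (Fin 3) ℝ Plane) (m : Plane) : core b m ⊆ tri b :=
  fun _ hp i => (hp i).1

lemma sum_coord (b : AffineBasis (Fin 3) ℝ Plane) (p : Plane) :
    b.coord 0 p + b.coord 1 p + b.coord 2 p = 1 := by
  rw [← b.sum_coord_apply_eq_one p, Fin.sum_univ_three]

lemma coord_linear_sub (b : AffineBasis (Fin 3) ℝ Plane) (i : Fin 3) (p m : Plane) :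
    (b.coord i).linear (p - m) = b.coord i p - b.coord i m := by
  simpa using (b.coord i).linearMap_vsub p m

/-! ### Areas of corners -/

lemma volume_level_eq_zero (b : AffineBasis (Fin 3) ℝ Plane) (i : Fin 3) (c : ℝ) :
    volume {p | b.coord i p = c} = 0 := by
  let s : AffineSubspace ℝ Plane := (AffineSubspace.mk' c ⊥).comap (b.coord i)
  have hs : (s : Set Plane) = {p | b.coord i p = c} := by
    ext p
    simp [s, AffineSubspace.mem_mk', sub_eq_zero]
  have hne : s ≠ ⊤ := by
    intro h
    obtain ⟨p, hp⟩ := b.surjective_coord i (c + 1)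
    have : p ∈ (s : Set Plane) := by rw [h]; trivial
    rw [hs] at this
    simp [hp] at this
  rw [← hs]
  exact Measure.addHaar_affineSubspace _ _ hne

lemma coord_homothety (b : AffineBasis (Fin 3) ℝ Plane) (i j : Fin 3) (r : ℝ) (p : Plane) :
    b.coord j (AffineMap.homothety (b i) r p) =
      (1 - r) * (if j = i then 1 else 0) + r * b.coord j p := by
  rw [AffineMap.homothety_eq_lineMap, AffineMap.apply_lineMap, AffineMap.lineMap_apply,
    b.coord_apply]
  simp only [vsub_eq_sub, smul_eq_mul, vadd_eq_add]
  ring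

/-- The homothety of ratio `1 - c` centered at `b i` maps the triangle onto a closed corner. -/
lemma homothety_image_tri (b : AffineBasis (Fin 3) ℝ Plane) (i : Fin 3) {c : ℝ}
    (hc0 : 0 ≤ c) (hc1 : c < 1) :
    AffineMap.homothety (b i) (1 - c) '' tri b = {p | p ∈ tri b ∧ c ≤ b.coord i p} := by
  have hpos : 0 < 1 - c := by linarith
  ext p
  constructor
  · rintro ⟨q, hq, rfl⟩
    have hq' : ∀ j, 0 ≤ (1 - c) * b.coord j q := fun j => mul_nonneg hpos.le (hq j)
    refine ⟨fun j => ?_, ?_⟩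
    · rw [coord_homothety]
      have := hq' j
      split_ifs <;> linarith
    · rw [coord_homothety]
      have := hq' i
      simp only [if_true]
      linarith
  · rintro ⟨hp, hpc⟩
    refine ⟨AffineMap.homothety (b i) (1 - c)⁻¹ p, fun j => ?_, ?_⟩
    · rw [coord_homothety]
      have e : (1 - c)⁻¹ * (1 - c) = 1 := inv_mul_cancel₀ hpos.ne'
      have hi : 0 < (1 - c)⁻¹ := inv_pos.2 hpos
      split_ifs with hj
      · subst hj
        have : (1 - (1 - c)⁻¹) * 1 + (1 - c)⁻¹ * b.coord j p =
            (1 - c)⁻¹ * (b.coord j p - c) := by linear_combination -e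
        rw [this]
        exact mul_nonneg hi.le (by linarith)
      · have := mul_nonneg hi.le (hp j)
        linarith
    · have := AffineMap.homothety_mul_apply (b i) (1 - c) (1 - c)⁻¹ p
      rw [mul_inv_cancel₀ hpos.ne'] at this
      simpa using this.symm

lemma volume_corner (b : AffineBasis (Fin 3) ℝ Plane) (i : Fin 3) {c : ℝ}
    (hc0 : 0 ≤ c) (hc1 : c < 1) :
    volume (corner b i c) = ENNReal.ofReal ((1 - c) ^ 2) * volume (tri b) := by
  have h := Measure.addHaar_image_homothety volume (b i) (1 - c) (tri b)
  rw [homothety_image_tri b i hc0 hc1] at h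
  simp only [finrank_euclideanSpace, Fintype.card_fin, abs_sq] at h
  rw [← h]
  have hsub : {p | p ∈ tri b ∧ c ≤ b.coord i p} ⊆ corner b i c ∪ {p | b.coord i p = c} := by
    rintro p ⟨hp, hpc⟩
    rcases hpc.lt_or_eq with h | h
    · exact Or.inl ⟨hp, h⟩
    · exact Or.inr h.symm
  refine le_antisymm (measure_mono fun p hp => ⟨hp.1, hp.2.le⟩) ?_
  refine (measure_mono hsub).trans ((measure_union_le _ _).trans ?_)
  rw [volume_level_eq_zero, add_zero]

lemma volume_real_corner (b : AffineBasis (Fin 3) ℝ Plane) (i : Fin 3) {c : ℝ}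
    (hc0 : 0 ≤ c) (hc1 : c < 1) :
    volume.real (corner b i c) = (1 - c) ^ 2 * volume.real (tri b) := by
  rw [Measure.real, volume_corner b i hc0 hc1, ENNReal.toReal_mul,
    ENNReal.toReal_ofReal (sq_nonneg _), Measure.real]

/-! ### Cancellation over the core -/

lemma norm_div_norm_le (φ : Plane →ₗ[ℝ] ℝ) (v : Plane) :
    ‖φ v / ‖v‖‖ ≤ ‖LinearMap.toContinuousLinearMap φ‖ := by
  rw [norm_div, norm_norm]
  exact div_le_of_le_mul₀ (norm_nonneg _) (norm_nonneg _)
    ((LinearMap.toContinuousLinearMap φ).le_opNorm v)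

lemma integrableOn_unit (b : AffineBasis (Fin 3) ℝ Plane) (m : Plane) (φ : Plane →ₗ[ℝ] ℝ) :
    IntegrableOn (fun p => φ (p - m) / ‖p - m‖) (tri b) := by
  have hφ : Continuous φ := φ.continuous_of_finiteDimensional
  refine Measure.integrableOn_of_bounded (M := ‖LinearMap.toContinuousLinearMap φ‖)
    (volume_tri_ne_top b) ?_ (Eventually.of_forall fun p => norm_div_norm_le φ _)
  exact Measurable.aestronglyMeasurable
    ((hφ.comp (continuous_id.sub continuous_const)).measurable.div
      (continuous_id.sub continuous_const).norm.measurable)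

/-- The integrand is odd under the reflection in `m`, which preserves the core. -/
lemma integral_core_eq_zero (b : AffineBasis (Fin 3) ℝ Plane) (m : Plane)
    (φ : Plane →ₗ[ℝ] ℝ) : ∫ p in core b m, φ (p - m) / ‖p - m‖ = 0 := by
  let e := MeasurableEquiv.subLeft (m + m)
  have he : MeasurePreserving e volume volume := Measure.measurePreserving_sub_left volume (m + m)
  have hc : ∀ i p, b.coord i (e p) = 2 * b.coord i m - b.coord i p := by
    intro i p
    have h1 := coord_linear_sub b i (e p) m
    have h2 := coord_linear_sub b i p m
    have h3 : e p - m = -(p - m) := by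
      change m + m - p - m = _
      abel
    rw [h3, map_neg, h2] at h1
    linarith
  have hpre : e ⁻¹' core b m = core b m := by
    ext p
    simp only [core, Set.mem_preimage, Set.mem_ofPred_eq, hc]
    refine forall_congr' fun i => ?_
    constructor <;> rintro ⟨h1, h2⟩ <;> constructor <;> linarith
  have h := he.setIntegral_preimage_emb e.measurableEmbedding
    (fun p => φ (p - m) / ‖p - m‖) (core b m)
  rw [hpre] at h
  have h4 : ∀ p, φ (e p - m) / ‖e p - m‖ = -(φ (p - m) / ‖p - m‖) := by
    intro p
    have h3 : e p - m = -(p - m) := by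
      change m + m - p - m = _
      abel
    rw [h3, map_neg, norm_neg, neg_div]
  simp only [h4, integral_neg] at h
  linarith

lemma integral_diff_core_eq_zero {b : AffineBasis (Fin 3) ℝ Plane} {m : Plane}
    (h : IsCritical b m) (φ : Plane →ₗ[ℝ] ℝ) :
    ∫ p in tri b \ core b m, φ (p - m) / ‖p - m‖ = 0 := by
  rw [setIntegral_sdiff (measurableSet_core b m) (integrableOn_unit b m φ)
    (core_subset_tri b m), h φ, integral_core_eq_zero, sub_zero]

/-- A functional `φ`, corrected by a function `η` of nonpositive integral, cannot be nonnegative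
on all directions towards the triangle minus the core and positive on a corner there. -/
lemma IsCritical.contradiction {b : AffineBasis (Fin 3) ℝ Plane} {m : Plane}
    (h : IsCritical b m) (φ : Plane →ₗ[ℝ] ℝ) (η : Plane → ℝ)
    (hη : IntegrableOn η (tri b \ core b m)) (hη0 : ∫ p in tri b \ core b m, η p ≤ 0)
    (hnn : ∀ p ∈ tri b \ core b m, 0 ≤ φ (p - m) / ‖p - m‖ + η p)
    (i : Fin 3) {c : ℝ} (hc0 : 0 ≤ c) (hc1 : c < 1) (hcm : 2 * b.coord i m ≤ c)
    (hpos : ∀ p ∈ corner b i c, 0 < φ (p - m) / ‖p - m‖ + η p) : False := by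
  have hS : MeasurableSet (tri b \ core b m) :=
    (measurableSet_tri b).diff (measurableSet_core b m)
  have hint := (integrableOn_unit b m φ).mono_set (t := tri b) (s := tri b \ core b m)
    Set.sdiff_subset
  have hsub : corner b i c ⊆ tri b \ core b m := by
    rintro p ⟨hp, hpc⟩
    refine ⟨hp, fun hk => ?_⟩
    linarith [(hk i).2]
  have hvol : 0 < volume (corner b i c) := by
    rw [volume_corner b i hc0 hc1]
    exact ENNReal.mul_pos (ENNReal.ofReal_pos.2 (pow_pos (by linarith) 2)).ne'
      (volume_tri_pos b).ne'
  have hgt : 0 < ∫ p in tri b \ core b m, (φ (p - m) / ‖p - m‖ + η p) := by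
    rw [setIntegral_pos_iff_support_of_nonneg_ae ((ae_restrict_iff' hS).2
      (Eventually.of_forall hnn)) (hint.add hη)]
    refine hvol.trans_le (measure_mono fun p hp => ⟨(hpos p hp).ne', hsub hp⟩)
  rw [integral_add hint hη, integral_diff_core_eq_zero h φ] at hgt
  linarith

/-! ### Bounds on the coordinates of a critical point -/

lemma IsCritical.coord_pos {b : AffineBasis (Fin 3) ℝ Plane} {m : Plane}
    (h : IsCritical b m) (i : Fin 3) : 0 < b.coord i m := by
  by_contra! hm
  refine h.contradiction (b.coord i).linear (fun _ => 0) integrableOn_zero (by simp)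
    (fun p hp => ?_) i le_rfl one_pos (by linarith) (fun p hp => ?_)
  · rw [add_zero, coord_linear_sub]
    exact div_nonneg (by linarith [hp.1 i]) (norm_nonneg _)
  · rw [add_zero, coord_linear_sub]
    refine div_pos (by linarith [hp.2]) (norm_pos_iff.2 (sub_ne_zero.2 ?_))
    rintro rfl
    linarith [hp.2]

/-- If `m` were at or beyond the midline parallel to the side from `b 1` to `b 2`, the triangle
minus the core would be the union of the corners at `b 1` and `b 2`, which lie on one side of the
chord with midpoint `m` across the angle at `b 0`. -/
lemma IsCritical.coord_zero_lt {b : AffineBasis (Fin 3) ℝ Plane} {m : Plane}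
    (h : IsCritical b m) : b.coord 0 m < 1 / 2 := by
  by_contra! hm
  have p1 := h.coord_pos 1
  have p2 := h.coord_pos 2
  have hs := sum_coord b m
  have key : ∀ p ∈ tri b, 2 * b.coord 1 m < b.coord 1 p ∨ 2 * b.coord 2 m < b.coord 2 p →
      0 < b.coord 2 m * (b.coord 1 p - b.coord 1 m) +
        b.coord 1 m * (b.coord 2 p - b.coord 2 m) := by
    rintro p hp (h1 | h1)
    · nlinarith [hp 2, mul_nonneg p1.le (hp 2), mul_pos p2 (sub_pos.2 h1)]
    · nlinarith [hp 1, mul_nonneg p2.le (hp 1), mul_pos p1 (sub_pos.2 h1)]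
  let φ := b.coord 2 m • (b.coord 1).linear + b.coord 1 m • (b.coord 2).linear
  have hφ : ∀ p ∈ tri b, 2 * b.coord 1 m < b.coord 1 p ∨ 2 * b.coord 2 m < b.coord 2 p →
      0 < φ (p - m) / ‖p - m‖ + 0 := by
    intro p hp hor
    have h1 : 0 < φ (p - m) := by
      simp only [φ, LinearMap.add_apply, LinearMap.smul_apply, coord_linear_sub, smul_eq_mul]
      exact key p hp hor
    rw [add_zero]
    refine div_pos h1 (norm_pos_iff.2 ?_)
    intro h0
    rw [h0, map_zero] at h1
    exact h1.false
  refine h.contradiction φ (fun _ => 0) integrableOn_zero (by simp)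
    (fun p hp => (hφ p hp.1 ?_).le) 1 (c := 2 * b.coord 1 m) (by linarith) (by linarith)
    le_rfl (fun p hp => hφ p hp.1 (Or.inl hp.2))
  by_contra! hk
  refine hp.2 fun i => ⟨hp.1 i, ?_⟩
  fin_cases i
  · have := sum_coord b p
    have h1 := hp.1 1
    have h2 := hp.1 2
    simp only [Fin.zero_eta]
    linarith
  · exact hk.1
  · exact hk.2

lemma neg_norm_le_of_mixed_signs {u v : Plane} {α β : ℝ} (hα : α ≤ 0) (hβ : 0 ≤ β) :
    -‖α • u + β • v‖ ≤ α * ‖u‖ + β * ‖v‖ := by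
  have h := norm_sub_le (α • u + β • v) (β • v)
  rw [add_sub_cancel_right, norm_smul, norm_smul, Real.norm_of_nonpos hα,
    Real.norm_of_nonneg hβ] at h
  linarith

/-- The three corners of the triangle outside its mirror image are disjoint, and if the bound
failed, the one at `b 2` would be at least as large as the other two together. The comparison
functional is proportional to the one agreeing with the norm at the vectors from `m` to the
endpoints of the segment where the mirror image of the side from `b 0` to `b 1` crosses the
triangle; the latter exceeds the norm over the corner at `b 2` and is at least minus the norm over
the others. -/
lemma IsCritical.coord_mul_lt {b : AffineBasis (Fin 3) ℝ Plane} {m : Plane}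
    (h : IsCritical b m) (h0 : b.coord 0 m < 1 / 2) (h1 : b.coord 1 m < 1 / 2)
    (h2 : b.coord 2 m < 1 / 2) : b.coord 0 m * b.coord 1 m < 1 / 8 := by
  by_contra! hm
  have p0 := h.coord_pos 0
  have p1 := h.coord_pos 1
  have p2 := h.coord_pos 2
  have hs := sum_coord b m
  have hmsum := b.linear_combination_coord_eq_self m
  rw [Fin.sum_univ_three] at hmsum
  set l0 := b.coord 0 m with hl0
  set l1 := b.coord 1 m with hl1
  set l2 := b.coord 2 m with hl2
  -- `m + u` and `m + v` are the endpoints of the segment where the line at level `2 * l2` of the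
  -- coordinate at `b 2` meets the triangle.
  let u : Plane := l2 • (b 2 - b 1) - l0 • (b 0 - b 1)
  let v : Plane := l2 • (b 2 - b 0) - l1 • (b 1 - b 0)
  let α : Plane → ℝ := fun p => l2 * (b.coord 1 p - l1) + l1 * (b.coord 2 p - l2)
  let β : Plane → ℝ := fun p => l2 * (b.coord 0 p - l0) + l0 * (b.coord 2 p - l2)
  have hD : 0 < l2 * (1 - 2 * l2) := mul_pos p2 (by linarith)
  set D := l2 * (1 - 2 * l2) with hDdef
  have hdec : ∀ p, D • (p - m) = α p • u + β p • v := by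
    intro p
    have hp := b.linear_combination_coord_eq_self p
    have hps := sum_coord b p
    rw [Fin.sum_univ_three] at hp
    have e2 : l2 = 1 - l0 - l1 := by linarith
    have e2' : b.coord 2 p = 1 - b.coord 0 p - b.coord 1 p := by linarith
    rw [← hmsum]
    nth_rewrite 1 [← hp]
    simp only [α, β, u, v, hDdef, e2', e2]
    module
  have hnorm : ∀ p, D * ‖p - m‖ = ‖α p • u + β p • v‖ := by
    intro p
    rw [← hdec, norm_smul, Real.norm_of_nonneg hD.le]
  let φ : Plane →ₗ[ℝ] ℝ := ‖u‖ • (l2 • (b.coord 1).linear + l1 • (b.coord 2).linear) +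
    ‖v‖ • (l2 • (b.coord 0).linear + l0 • (b.coord 2).linear)
  have hφ : ∀ p, φ (p - m) = α p * ‖u‖ + β p * ‖v‖ := by
    intro p
    simp only [φ, α, β, LinearMap.add_apply, LinearMap.smul_apply, coord_linear_sub, smul_eq_mul,
      ← hl0, ← hl1, ← hl2]
    ring
  have hneg : ∀ p, (α p ≤ 0 ∧ 0 ≤ β p ∨ 0 ≤ α p ∧ β p ≤ 0) → p ≠ m →
      0 ≤ φ (p - m) / ‖p - m‖ + D := by
    intro p hp hpm
    have hn : 0 < ‖p - m‖ := norm_pos_iff.2 (sub_ne_zero.2 hpm)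
    have : -D ≤ φ (p - m) / ‖p - m‖ := by
      rw [le_div_iff₀ hn, neg_mul, hnorm, hφ]
      rcases hp with hp | hp
      · exact neg_norm_le_of_mixed_signs hp.1 hp.2
      · rw [add_comm (α p • u), add_comm (α p * ‖u‖)]
        exact neg_norm_le_of_mixed_signs hp.2 hp.1
    linarith
  have hc2 : ∀ p ∈ corner b 2 (2 * l2), 0 < φ (p - m) / ‖p - m‖ - D := by
    rintro p ⟨hp, hpc⟩
    have hα : 0 < α p := by
      have := hp 1
      simp only [α]
      nlinarith [mul_nonneg p2.le this, mul_pos p1 (sub_pos.2 hpc)]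
    have hβ : 0 < β p := by
      have := hp 0
      simp only [β]
      nlinarith [mul_nonneg p2.le this, mul_pos p0 (sub_pos.2 hpc)]
    have hn : 0 < ‖p - m‖ := by
      refine norm_pos_iff.2 (sub_ne_zero.2 ?_)
      rintro rfl
      linarith
    have hu2 : (b.coord 2).linear u = l2 := by
      simp only [u]
      rw [map_sub, map_smul, map_smul, coord_linear_sub, coord_linear_sub]
      simp [b.coord_apply]
    have hv2 : (b.coord 2).linear v = l2 := by
      simp only [v]
      rw [map_sub, map_smul, map_smul, coord_linear_sub, coord_linear_sub]
      simp [b.coord_apply]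
    have hu0 : (b.coord 0).linear u = -l0 := by
      simp only [u]
      rw [map_sub, map_smul, map_smul, coord_linear_sub, coord_linear_sub]
      simp [b.coord_apply]
    have hv0 : (b.coord 0).linear v = l1 - l2 := by
      simp only [v]
      rw [map_sub, map_smul, map_smul, coord_linear_sub, coord_linear_sub]
      simp [b.coord_apply]
      ring
    -- `u` and `v` have the same height towards `b 2`, so they could only be parallel if equal,
    -- which happens only for `l2 = 1 / 2`.
    have hray : ¬ SameRay ℝ (α p • u) (β p • v) := by
      intro hr
      rcases hr with hr | hr | ⟨r, s, hr, hs', hrs⟩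
      · have := congrArg (b.coord 2).linear hr
        rw [map_smul, hu2, map_zero, smul_eq_mul] at this
        exact (mul_pos hα p2).ne' this
      · have := congrArg (b.coord 2).linear hr
        rw [map_smul, hv2, map_zero, smul_eq_mul] at this
        exact (mul_pos hβ p2).ne' this
      · have e2 := congrArg (b.coord 2).linear hrs
        have e0 := congrArg (b.coord 0).linear hrs
        simp only [map_smul, hu2, hv2, hu0, hv0, smul_eq_mul] at e2 e0
        have e3 : r * α p = s * β p := by
          refine mul_right_cancel₀ p2.ne' ?_
          linarith
        have e4 : (s * β p) * (l0 + l1 - l2) = 0 := by linear_combination -e0 - l0 * e3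
        have : 0 < (s * β p) * (l0 + l1 - l2) :=
          mul_pos (mul_pos hs' hβ) (by linarith)
        linarith
    have hlt := (not_sameRay_iff_norm_add_lt).1 hray
    rw [← hnorm, norm_smul, norm_smul, Real.norm_of_nonneg hα.le, Real.norm_of_nonneg hβ.le,
      ← hφ] at hlt
    have := (lt_div_iff₀ hn).2 hlt
    linarith
  have hc0 : ∀ p ∈ corner b 0 (2 * l0), 0 ≤ φ (p - m) / ‖p - m‖ + D := by
    rintro p ⟨hp, hpc⟩
    have hps := sum_coord b p
    have g1 := hp 1
    have g2 := hp 2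
    refine hneg p (Or.inl ⟨?_, ?_⟩) ?_
    · simp only [α]
      rcases le_total l1 l2 with hle | hle
      · nlinarith [mul_nonneg (sub_nonneg.2 hle) g2,
          mul_pos p2 (sub_pos.2 hpc)]
      · nlinarith [mul_nonneg (sub_nonneg.2 hle) g1,
          mul_pos p1 (sub_pos.2 hpc)]
    · simp only [β]
      nlinarith [mul_nonneg p0.le g2, mul_pos p2 (sub_pos.2 hpc)]
    · rintro rfl
      linarith
  have hc1 : ∀ p ∈ corner b 1 (2 * l1), 0 ≤ φ (p - m) / ‖p - m‖ + D := by
    rintro p ⟨hp, hpc⟩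
    have hps := sum_coord b p
    have g1 := hp 0
    have g2 := hp 2
    refine hneg p (Or.inr ⟨?_, ?_⟩) ?_
    · simp only [α]
      nlinarith [mul_nonneg p1.le g2, mul_pos p2 (sub_pos.2 hpc)]
    · simp only [β]
      rcases le_total l0 l2 with hle | hle
      · nlinarith [mul_nonneg (sub_nonneg.2 hle) g2,
          mul_pos p2 (sub_pos.2 hpc)]
      · nlinarith [mul_nonneg (sub_nonneg.2 hle) g1,
          mul_pos p0 (sub_pos.2 hpc)]
    · rintro rfl
      linarith
  let I : Fin 3 → Plane → ℝ := fun i => (corner b i (2 * b.coord i m)).indicator fun _ => D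
  have hfin : volume (tri b \ core b m) ≠ ⊤ :=
    ((measure_mono Set.sdiff_subset).trans_lt (isCompact_tri b).measure_lt_top).ne
  have hIint : ∀ i, IntegrableOn (I i) (tri b \ core b m) := fun i =>
    (integrableOn_const hfin).indicator (measurableSet_corner b i _)
  have hIval : ∀ i, b.coord i m < 1 / 2 → ∫ p in tri b \ core b m, I i p =
      (1 - 2 * b.coord i m) ^ 2 * volume.real (tri b) * D := by
    intro i hi
    have hsub : corner b i (2 * b.coord i m) ⊆ tri b \ core b m := by
      rintro p ⟨hp, hpc⟩
      exact ⟨hp, fun hk => hpc.not_ge (hk i).2⟩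
    simp only [I]
    rw [setIntegral_indicator (measurableSet_corner b i _), Set.inter_eq_right.2 hsub,
      setIntegral_const, volume_real_corner b i (by linarith [h.coord_pos i]) (by linarith),
      smul_eq_mul]
  have hadd : IntegrableOn (fun p => I 0 p + I 1 p) (tri b \ core b m) :=
    (hIint 0).add (hIint 1)
  have hmem : ∀ i p, p ∈ corner b i (2 * b.coord i m) → I i p = D := fun i p hp =>
    Set.indicator_of_mem hp _
  have hnmem : ∀ i p, p ∉ corner b i (2 * b.coord i m) → I i p = 0 := fun i p hp =>
    Set.indicator_of_notMem hp _
  have hdis : ∀ p, p ∈ tri b →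
      (p ∈ corner b 0 (2 * l0) → p ∉ corner b 1 (2 * l1) ∧ p ∉ corner b 2 (2 * l2)) ∧
      (p ∈ corner b 1 (2 * l1) → p ∉ corner b 2 (2 * l2)) := by
    intro p hp
    have hps := sum_coord b p
    have g0 := hp 0
    have g1 := hp 1
    have g2 := hp 2
    refine ⟨fun hp0 => ⟨fun hp1 => ?_, fun hp2 => ?_⟩, fun hp1 hp2 => ?_⟩
    · linarith [hp0.2, hp1.2]
    · linarith [hp0.2, hp2.2]
    · linarith [hp1.2, hp2.2]
  have hpos : ∀ p ∈ corner b 2 (2 * l2), 0 < φ (p - m) / ‖p - m‖ + (I 0 p + I 1 p - I 2 p) := by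
    intro p hp
    have hd := hdis p hp.1
    rw [hnmem 0 p fun h0 => (hd.1 h0).2 hp, hnmem 1 p fun h1 => hd.2 h1 hp, hmem 2 p hp]
    linarith [hc2 p hp]
  refine h.contradiction φ (fun p => I 0 p + I 1 p - I 2 p)
    (hadd.sub (hIint 2)) ?_ (fun p hp => ?_) 2 (c := 2 * l2)
    (by linarith) (by linarith) le_rfl hpos
  · rw [integral_sub hadd (hIint 2), integral_add (hIint 0) (hIint 1),
      hIval 0 h0, hIval 1 h1, hIval 2 h2, ← hl0, ← hl1, ← hl2]
    -- The areas of the corners compare through the identity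
    -- `(1 - 2 * l2) ^ 2 - (1 - 2 * l0) ^ 2 - (1 - 2 * l1) ^ 2 = 8 * l0 * l1 - 1`.
    have e : (1 - 2 * l0) ^ 2 * volume.real (tri b) * D + (1 - 2 * l1) ^ 2 * volume.real (tri b) * D
        - (1 - 2 * l2) ^ 2 * volume.real (tri b) * D
        = -((8 * (l0 * l1) - 1) * (volume.real (tri b) * D)) := by
      have e2 : l2 = 1 - l0 - l1 := by linarith
      rw [show (1 - 2 * l2) = 2 * (l0 + l1) - 1 by rw [e2]; ring]
      ring
    rw [e, neg_nonpos]
    exact mul_nonneg (by linarith) (mul_nonneg measureReal_nonneg hD.le)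
  · by_cases k2 : p ∈ corner b 2 (2 * l2)
    · exact (hpos p k2).le
    have hd := hdis p hp.1
    by_cases k0 : p ∈ corner b 0 (2 * l0)
    · rw [hmem 0 p k0, hnmem 1 p (hd.1 k0).1, hnmem 2 p k2]
      linarith [hc0 p k0]
    by_cases k1 : p ∈ corner b 1 (2 * l1)
    · rw [hnmem 0 p k0, hmem 1 p k1, hnmem 2 p k2]
      linarith [hc1 p k1]
    refine absurd (fun i => ⟨hp.1 i, ?_⟩) hp.2
    by_contra! hi
    fin_cases i
    · exact k0 ⟨hp.1, hi⟩
    · exact k1 ⟨hp.1, hi⟩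
    · exact k2 ⟨hp.1, hi⟩

lemma IsCritical.reindex {b : AffineBasis (Fin 3) ℝ Plane} {m : Plane} (h : IsCritical b m)
    (e : Equiv.Perm (Fin 3)) : IsCritical (b.reindex e) m := by
  have : tri (b.reindex e) = tri b := by
    ext p
    simp only [tri, Set.mem_ofPred_eq, AffineBasis.coord_reindex]
    exact e.symm.forall_congr_left.trans (by simp)
  intro φ
  rw [this]
  exact h φ

/-! ### Minimizers of the area distance functional -/

/-- Differentiation under the integral sign at a minimizer; the distance to `P` fails to be
differentiable only for the single point `P = m`. -/
lemma isCritical_of_forall_le {b : AffineBasis (Fin 3) ℝ Plane} {m : Plane}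
    (hmin : ∀ X, ∫ p in tri b, ‖p - m‖ ≤ ∫ p in tri b, ‖p - X‖) : IsCritical b m := by
  intro φ
  let w : Plane := (InnerProductSpace.toDual ℝ Plane).symm (LinearMap.toContinuousLinearMap φ)
  have hw : ∀ x, inner ℝ x w = φ x := by
    intro x
    rw [real_inner_comm, InnerProductSpace.toDual_symm_apply]
    rfl
  have hcont : ∀ t : ℝ, Continuous fun p : Plane => ‖p - (m + t • w)‖ := fun t => by fun_prop
  have hder := hasDerivAt_integral_of_dominated_loc_of_lip
    (μ := volume.restrict (tri b)) (F := fun (t : ℝ) (p : Plane) => ‖p - (m + t • w)‖)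
    (x₀ := 0) (s := Set.univ) (bound := fun _ => ‖w‖)
    (F' := fun p => -(φ (p - m) / ‖p - m‖)) univ_mem
    (Eventually.of_forall fun t => (hcont t).aestronglyMeasurable)
    ((hcont 0).continuousOn.integrableOn_compact (isCompact_tri b))
    (integrableOn_unit b m φ).neg.aestronglyMeasurable
    (Eventually.of_forall fun p => ?_)
    (integrableOn_const (volume_tri_ne_top b))
    ?_
  · have hloc : IsLocalMin (fun t : ℝ => ∫ p in tri b, ‖p - (m + t • w)‖) 0 :=
      Eventually.of_forall fun t => by simpa using hmin (m + t • w)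
    have h0 := hloc.hasDerivAt_eq_zero hder.2
    rw [integral_neg, neg_eq_zero] at h0
    exact h0
  · refine LipschitzWith.lipschitzOnWith (LipschitzWith.of_dist_le_mul fun s t => ?_)
    rw [Real.coe_nnabs, abs_norm, Real.dist_eq, Real.dist_eq]
    refine (abs_norm_sub_norm_le _ _).trans ?_
    have : p - (m + s • w) - (p - (m + t • w)) = -((s - t) • w) := by module
    rw [this, norm_neg, norm_smul, Real.norm_eq_abs, mul_comm]
  · have hne : ∀ᵐ p ∂(volume.restrict (tri b)), p ≠ m := by
      refine ae_restrict_of_ae ?_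
      rw [ae_iff]
      simp
    filter_upwards [hne] with p hp
    have hn : 0 < ‖p - m‖ := norm_pos_iff.2 (sub_ne_zero.2 hp)
    have h1 : HasDerivAt (fun t : ℝ => p - (m + t • w)) (-w) 0 := by
      simpa using (((hasDerivAt_id (0 : ℝ)).smul_const w).const_add m).const_sub p
    have h2 := h1.norm_sq.sqrt (by simpa using hn.ne')
    have h3 : (fun t : ℝ => ‖p - (m + t • w)‖) =
        fun t : ℝ => Real.sqrt (‖p - (m + t • w)‖ ^ 2) := by
      funext t
      rw [Real.sqrt_sq (norm_nonneg _)]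
    rw [h3]
    convert! h2 using 1
    simp only [zero_smul, add_zero, inner_neg_right, hw,
      Real.sqrt_sq (norm_nonneg _)]
    field_simp

lemma IsCritical.coord_lt_half {b : AffineBasis (Fin 3) ℝ Plane} {m : Plane}
    (h : IsCritical b m) (i : Fin 3) : b.coord i m < 1 / 2 := by
  simpa using (h.reindex (Equiv.swap 0 i)).coord_zero_lt

lemma IsCritical.mul_coord_lt {b : AffineBasis (Fin 3) ℝ Plane} {m : Plane}
    (h : IsCritical b m) (e : Equiv.Perm (Fin 3)) :
    b.coord (e 0) m * b.coord (e 1) m < 1 / 8 := by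
  have hh := fun i => (h.reindex e.symm).coord_lt_half i
  simpa using (h.reindex e.symm).coord_mul_lt (hh 0) (hh 1) (hh 2)

/-- The cusps of the curvilinear triangle bounded by the three hyperbolas are at `(1/2, 1/4, 1/4)`
and its permutations, which explains the constant. -/
lemma quarter_lt {x y z : ℝ} (hs : x + y + z = 1) (hx : x < 1 / 2) (hy : y < 1 / 2)
    (hxy : x * y < 1 / 8) : 1 / 4 < z := by
  nlinarith [mul_pos (sub_pos.2 hx) (sub_pos.2 hy)]

/-! ### Barycentric bounds -/

/-- The barycentric coordinates of a global minimizer of the area distance functional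
of a nondegenerate triangle are all greater than `1/4`, and moreover the pairwise
products of the coordinates are all less than `1/8`. -/
theorem median_area_barycentric_bounds
    (A B C m : Plane) (hAI : AffineIndependent ℝ ![A, B, C])
    (hmin : ∀ X : Plane, areaDist A B C m ≤ areaDist A B C X)
    (l1 l2 l3 : ℝ) (hsum : l1 + l2 + l3 = 1)
    (hbar : m = l1 • A + l2 • B + l3 • C) :
    (1 / 4 < l1 ∧ 1 / 4 < l2 ∧ 1 / 4 < l3) ∧
    l1 * l2 < 1 / 8 ∧ l2 * l3 < 1 / 8 ∧ l3 * l1 < 1 / 8 := by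
  let b : AffineBasis (Fin 3) ℝ Plane := ⟨![A, B, C], hAI, by
    rw [hAI.affineSpan_eq_top_iff_card_eq_finrank_add_one]
    simp⟩
  have hb : ⇑b = ![A, B, C] := rfl
  have htri : tri b = convexHull ℝ ({A, B, C} : Set Plane) := by
    rw [tri_eq, hb]
    congr 1
    ext x
    simp [eq_comm]
    tauto
  have hw : ∑ i, (![l1, l2, l3] : Fin 3 → ℝ) i = 1 := by
    simpa [Fin.sum_univ_three] using hsum
  have hm : m = Finset.univ.affineCombination ℝ b ![l1, l2, l3] := by
    rw [Finset.affineCombination_eq_linear_combination _ _ _ hw, hbar, hb]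
    simp [Fin.sum_univ_three]
  have hc : ∀ i, b.coord i m = (![l1, l2, l3] : Fin 3 → ℝ) i := fun i => by
    rw [hm, b.coord_apply_combination_of_mem (Finset.mem_univ i) hw]
  have h : IsCritical b m := isCritical_of_forall_le fun X => by
    rw [htri]
    exact hmin X
  have k1 : l1 < 1 / 2 := by simpa [hc] using h.coord_lt_half 0
  have k2 : l2 < 1 / 2 := by simpa [hc] using h.coord_lt_half 1
  have k3 : l3 < 1 / 2 := by simpa [hc] using h.coord_lt_half 2
  have m12 : l1 * l2 < 1 / 8 := by simpa [hc] using h.mul_coord_lt 1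
  have m23 : l2 * l3 < 1 / 8 := by simpa [hc] using h.mul_coord_lt (finRotate 3)
  have m31 : l3 * l1 < 1 / 8 := by simpa [hc] using h.mul_coord_lt (finRotate 3).symm
  exact ⟨⟨quarter_lt (by linarith) k2 k3 m23, quarter_lt (by linarith) k3 k1 m31,
    quarter_lt hsum k1 k2 m12⟩, m12, m23, m31⟩
end
end

section
/- Let a ≥ b ≥ c > 0 with a = b + c, and let A, B, C ∈ ℝ² be a degenerate triangle configuration with these side lengths. Then there exist reals λ₁, λ₂, λ₃ with λ₁ + λ₂ + λ₃ = 1 such that for every sequence (Aₙ, Bₙ, Cₙ) of affinely independent triples in ℝ² with Aₙ → A, Bₙ → B, Cₙ → C, and every choice of global minimizers mₙ of the perimeter distance functional of the triangle AₙBₙCₙ, the barycentric coordinates of mₙ with respect to (Aₙ, Bₙ, Cₙ) converge to (λ₁, λ₂, λ₃). In particular the limit does not depend on the approximating sequence. -/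
/-!
The degenerate perimeter covers the segment `BC` twice, so its median is the midpoint of `BC`. This
fixes the limit of the medians as points, and with it one linear relation between the limits of the
barycentric coordinates. A second relation comes from the direction transverse to `BC`.

In an orthonormal frame with origin `Cₙ` and first axis along `BₙCₙ`, write `Bₙ = (u, 0)`,
`Aₙ = (p, h)`, `mₙ = (x, y)` with `h > 0`, `h → 0`. The perimeter is the base `[0, u]` together with
the graph of a tent function `g` of height `h` with apex over `p`, and the perimeter distance
becomes `flatPerim u p h x y` (`perimDist_eq_flatPerim`).

* *Horizontal position.* Comparing `mₙ` with `(u / 2, 0)` and using `√(σ² + D²) ≥ |σ|` gives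
  `2 ∫ |s - x| ds ≤ u² / 2 + O(h)`, which forces `x → a / 2`
  (`le_flatPerim`, `flatPerim_center_le`).
* *Vertical position.* By convexity, moving the point vertically from height `y` to `y'` changes the
  functional by at most `(y' - y) F(y')`, where `F` (the `force`) is the integral of the vertical
  component of the unit vector from the perimeter to `(x, y')` (`flatPerim_sub_le`). Since `g` is
  `O(h)`-Lipschitz, replacing it by the constant `g(x)` costs only `O(h)` (`abs_force_sub_le`). What
  remains is the pull of two horizontal segments at heights `0` and `g(x)`. It has the sign of
  `2 y' - g(x)`, and for `y' = η h` its size is at least a multiple of `|2 y' - g(x)| log (1 / h)`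
  (`integral_sinDir_gap`), so the logarithm beats the error `O(h)`. Hence the median lies
  asymptotically halfway between the base and the tent: `y / h → lim g(x) / (2 h) = a / (4 b)`.

As `y = μ₁ h` and `x = μ₁ p + μ₂ u`, the limit is `(a / (4 b), 1 / 4, 3 / 4 - a / (4 b))`. Treating
the sides `CA` and `AB` together as one graph makes the case `b = c`, in which the midpoint of `BC` is
the vertex `A`, no different from the others.
-/

open MeasureTheory Metric Filter

noncomputable section

/-- The perimeter distance functional of the triangle `ABC`. -/
noncomputable def perimDist (A B C X : Plane) : ℝ :=
  ‖A - B‖ * (∫ t in (0:ℝ)..1, ‖(1 - t) • A + t • B - X‖) +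
  ‖B - C‖ * (∫ t in (0:ℝ)..1, ‖(1 - t) • B + t • C - X‖) +
  ‖C - A‖ * (∫ t in (0:ℝ)..1, ‖(1 - t) • C + t • A - X‖)

/-- A degenerate triangle configuration with side lengths `a ≥ b ≥ c > 0`, `a = b + c`:
collinear points with `‖B - C‖ = a`, `‖C - A‖ = b`, `‖A - B‖ = c`. -/
def DegenConfig (a b c : ℝ) (A B C : Plane) : Prop :=
  Collinear ℝ ({A, B, C} : Set Plane) ∧ ‖B - C‖ = a ∧ ‖C - A‖ = b ∧ ‖A - B‖ = c

/-! ### The functional in adapted coordinates -/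

/-- For `0 < p < a` and `h > 0`, the piecewise linear function on `[0, a]` that vanishes at the
endpoints and equals `h` at `p`. As a minimum of two linear functions it is continuous and Lipschitz
without any case distinction. -/
def tent (a p h s : ℝ) : ℝ := min (h / p * s) (h / (a - p) * (a - s))

/-- The second component of the unit vector in the direction `(σ, D)`; it is `0` for the zero
vector. -/
def sinDir (σ D : ℝ) : ℝ := D / √(σ ^ 2 + D ^ 2)

/-- The perimeter distance functional, at `(x, y)`, of the triangle with vertices `(0, 0)`, `(a, 0)`
and `(p, h)`. All three sides are parametrized by the first coordinate; the square roots in front of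
the last two integrals are the arc length factors. -/
def flatPerim (a p h x y : ℝ) : ℝ :=
  (∫ s in (0:ℝ)..a, √((s - x) ^ 2 + y ^ 2)) +
  √(1 + (h / p) ^ 2) * (∫ s in (0:ℝ)..p, √((s - x) ^ 2 + (y - tent a p h s) ^ 2)) +
  √(1 + (h / (a - p)) ^ 2) * (∫ s in p..a, √((s - x) ^ 2 + (y - tent a p h s) ^ 2))

lemma tent_left {a p h s : ℝ} (hp : 0 < p) (hpa : p < a) (hh : 0 < h) (hs : s ≤ p) :
    tent a p h s = h / p * s := by
  have h1 : 0 < a - p := by linarith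
  refine min_eq_left ?_
  calc h / p * s ≤ h / p * p := by gcongr
    _ = h / (a - p) * (a - p) := by field_simp
    _ ≤ h / (a - p) * (a - s) := by gcongr

lemma tent_right {a p h s : ℝ} (hp : 0 < p) (hpa : p < a) (hh : 0 < h) (hs : p ≤ s) :
    tent a p h s = h / (a - p) * (a - s) := by
  have h1 : 0 < a - p := by linarith
  refine min_eq_right ?_
  calc h / (a - p) * (a - s) ≤ h / (a - p) * (a - p) := by gcongr
    _ = h / p * p := by field_simp
    _ ≤ h / p * s := by gcongr

lemma tent_nonneg {a p h s : ℝ} (hp : 0 < p) (hpa : p < a) (hh : 0 < h) (hs : 0 ≤ s)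
    (hsa : s ≤ a) : 0 ≤ tent a p h s := by
  have h1 : 0 < a - p := by linarith
  have h2 : 0 ≤ a - s := by linarith
  exact le_min (by positivity) (by positivity)

lemma tent_le {a p h s : ℝ} (hp : 0 < p) (hpa : p < a) (hh : 0 < h) : tent a p h s ≤ h := by
  have h1 : 0 < a - p := by linarith
  rcases le_total s p with hs | hs
  · calc tent a p h s = h / p * s := tent_left hp hpa hh hs
      _ ≤ h / p * p := by gcongr
      _ = h := by field_simp
  · calc tent a p h s = h / (a - p) * (a - s) := tent_right hp hpa hh hs
      _ ≤ h / (a - p) * (a - p) := by gcongr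
      _ = h := by field_simp

lemma tent_lipschitz {a p h K : ℝ} (hp : 0 < p) (hpa : p < a) (hh : 0 < h) (hK : 1 / p ≤ K)
    (hK' : 1 / (a - p) ≤ K) (s x : ℝ) :
    |tent a p h s - tent a p h x| ≤ K * h * |s - x| := by
  have h1 : 0 < a - p := by linarith
  refine (abs_min_sub_min_le_max _ _ _ _).trans (max_le ?_ ?_)
  · rw [← mul_sub, abs_mul, abs_of_pos (by positivity)]
    gcongr
    calc h / p = 1 / p * h := by ring
      _ ≤ K * h := by gcongr
  · rw [← mul_sub, abs_mul, abs_of_pos (by positivity), show a - s - (a - x) = -(s - x) by ring,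
      abs_neg]
    gcongr
    calc h / (a - p) = 1 / (a - p) * h := by ring
      _ ≤ K * h := by gcongr

lemma continuous_tent (a p h : ℝ) : Continuous (tent a p h) := by
  unfold tent; fun_prop

lemma abs_sinDir_le_one (σ D : ℝ) : |sinDir σ D| ≤ 1 := by
  unfold sinDir
  rw [abs_div, abs_of_nonneg (Real.sqrt_nonneg _)]
  refine div_le_one_of_le₀ ?_ (Real.sqrt_nonneg _)
  exact Real.abs_le_sqrt (by nlinarith [sq_nonneg σ])

/-- Subgradient inequality for the norm under vertical displacements. It holds also at the origin,
where `sinDir` takes the value `0`. -/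
lemma sqrt_sub_sqrt_le (σ D D' : ℝ) :
    √(σ ^ 2 + D' ^ 2) - √(σ ^ 2 + D ^ 2) ≤ sinDir σ D' * (D' - D) := by
  unfold sinDir
  have hr' := Real.sqrt_nonneg (σ ^ 2 + D' ^ 2)
  have hr := Real.sqrt_nonneg (σ ^ 2 + D ^ 2)
  have e' := Real.sq_sqrt (show 0 ≤ σ ^ 2 + D' ^ 2 by positivity)
  have e := Real.sq_sqrt (show 0 ≤ σ ^ 2 + D ^ 2 by positivity)
  set r' := √(σ ^ 2 + D' ^ 2)
  set r := √(σ ^ 2 + D ^ 2)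
  rcases hr'.eq_or_lt with h0 | h0
  · rw [← h0]; simp [hr]
  · rw [div_mul_eq_mul_div, le_div_iff₀ h0]
    -- Cauchy–Schwarz for `(σ, D')` and `(σ, D)`
    have : σ ^ 2 + D' * D ≤ r' * r := by
      refine le_of_sq_le_sq ?_ (by positivity)
      rw [mul_pow, e, e']
      nlinarith [sq_nonneg (σ * (D' - D))]
    nlinarith

/-- With `r₁`, `r₂` the two norms, this rests on
`2 (D₁ r₂ - D₂ r₁) = (D₁ - D₂) (r₁ + r₂) - (D₁ + D₂) (r₁ - r₂)` and `r₁² - r₂² = D₁² - D₂²`. -/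
lemma sinDir_sub (σ D₁ D₂ : ℝ) (hσ : σ ≠ 0) :
    sinDir σ D₁ - sinDir σ D₂ = (D₁ - D₂) *
      (((√(σ ^ 2 + D₁ ^ 2) + √(σ ^ 2 + D₂ ^ 2)) ^ 2 - (D₁ + D₂) ^ 2) /
      (2 * (√(σ ^ 2 + D₁ ^ 2) + √(σ ^ 2 + D₂ ^ 2)) *
        (√(σ ^ 2 + D₁ ^ 2) * √(σ ^ 2 + D₂ ^ 2)))) := by
  unfold sinDir
  have p1 : 0 < √(σ ^ 2 + D₁ ^ 2) := by positivity
  have p2 : 0 < √(σ ^ 2 + D₂ ^ 2) := by positivity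
  have e1 := Real.sq_sqrt (show 0 ≤ σ ^ 2 + D₁ ^ 2 by positivity)
  have e2 := Real.sq_sqrt (show 0 ≤ σ ^ 2 + D₂ ^ 2 by positivity)
  set r₁ := √(σ ^ 2 + D₁ ^ 2)
  set r₂ := √(σ ^ 2 + D₂ ^ 2)
  have : r₁ + r₂ ≠ 0 := by positivity
  field_simp
  have h : r₁ ^ 2 - r₂ ^ 2 = D₁ ^ 2 - D₂ ^ 2 := by rw [e1, e2]; ring
  linear_combination (-1) * (D₁ + D₂) * h

lemma sinDir_sub_le {σ D₁ D₂ : ℝ} (hσ : σ ≠ 0) (hD : D₂ ≤ D₁) :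
    sinDir σ D₁ - sinDir σ D₂ ≤ (D₁ - D₂) / |σ| := by
  rw [sinDir_sub σ D₁ D₂ hσ, div_eq_mul_inv (D₁ - D₂)]
  have hs : 0 < |σ| := abs_pos.2 hσ
  have q1 : |σ| ≤ √(σ ^ 2 + D₁ ^ 2) := Real.abs_le_sqrt (by nlinarith [sq_nonneg D₁])
  have q2 : |σ| ≤ √(σ ^ 2 + D₂ ^ 2) := Real.abs_le_sqrt (by nlinarith [sq_nonneg D₂])
  set r₁ := √(σ ^ 2 + D₁ ^ 2)
  set r₂ := √(σ ^ 2 + D₂ ^ 2)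
  have p1 : 0 < r₁ := by linarith
  have p2 : 0 < r₂ := by linarith
  refine mul_le_mul_of_nonneg_left ?_ (by linarith)
  calc _ ≤ (r₁ + r₂) ^ 2 / (2 * (r₁ + r₂) * (r₁ * r₂)) := by
        gcongr; nlinarith [sq_nonneg (D₁ + D₂)]
    _ = (r₁⁻¹ + r₂⁻¹) / 2 := by field_simp; ring
    _ ≤ (|σ|⁻¹ + |σ|⁻¹) / 2 := by gcongr
    _ = |σ|⁻¹ := by ring

lemma le_sinDir_sub {σ D₁ D₂ : ℝ} (hσ : 0 < σ) (hD : D₂ ≤ D₁) (h1 : |D₁| ≤ σ) (h2 : |D₂| ≤ σ) :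
    (D₁ - D₂) / 4 * σ⁻¹ ≤ sinDir σ D₁ - sinDir σ D₂ := by
  rw [sinDir_sub σ D₁ D₂ hσ.ne']
  have hD1 : D₁ ^ 2 ≤ σ ^ 2 := sq_le_sq' (by linarith [(abs_le.1 h1).1]) (abs_le.1 h1).2
  have hD2 : D₂ ^ 2 ≤ σ ^ 2 := sq_le_sq' (by linarith [(abs_le.1 h2).1]) (abs_le.1 h2).2
  have p1 : 0 < √(σ ^ 2 + D₁ ^ 2) := by positivity
  have p2 : 0 < √(σ ^ 2 + D₂ ^ 2) := by positivity
  have e1 := Real.sq_sqrt (show 0 ≤ σ ^ 2 + D₁ ^ 2 by positivity)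
  have e2 := Real.sq_sqrt (show 0 ≤ σ ^ 2 + D₂ ^ 2 by positivity)
  set r₁ := √(σ ^ 2 + D₁ ^ 2)
  set r₂ := √(σ ^ 2 + D₂ ^ 2)
  have u1 : r₁ ≤ 3 / 2 * σ := by nlinarith
  have u2 : r₂ ≤ 3 / 2 * σ := by nlinarith
  -- Cauchy–Schwarz, giving `(r₁ + r₂)² ≥ (2 σ)² + (D₁ + D₂)²`
  have key : σ ^ 2 + D₁ * D₂ ≤ r₁ * r₂ := by
    refine le_of_sq_le_sq ?_ (by positivity)
    rw [mul_pow, e1, e2]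
    nlinarith [sq_nonneg (σ * (D₁ - D₂))]
  rw [div_mul_eq_mul_div, mul_div_assoc]
  refine mul_le_mul_of_nonneg_left ?_ (by linarith)
  calc σ⁻¹ / 4 ≤ (4 * σ ^ 2) / (2 * (3 / 2 * σ + 3 / 2 * σ) * (3 / 2 * σ * (3 / 2 * σ))) := by
        rw [show (4 * σ ^ 2) / (2 * (3 / 2 * σ + 3 / 2 * σ) * (3 / 2 * σ * (3 / 2 * σ)))
          = 8 / 27 * σ⁻¹ by field_simp; norm_num]
        have : 0 < σ⁻¹ := by positivity
        linarith
    _ ≤ _ := by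
        gcongr
        all_goals nlinarith

lemma sinDir_mono (σ : ℝ) {D₁ D₂ : ℝ} (hD : D₂ ≤ D₁) : sinDir σ D₂ ≤ sinDir σ D₁ := by
  have h1 := sqrt_sub_sqrt_le σ D₁ D₂
  have h2 := sqrt_sub_sqrt_le σ D₂ D₁
  rcases hD.eq_or_lt with rfl | hD
  · rfl
  · nlinarith

/-- The integrand may jump where `s = x` and `D s = 0`, but it is bounded and measurable. -/
lemma intervalIntegrable_sinDir {D : ℝ → ℝ} (hD : Continuous D) (x u v : ℝ) :
    IntervalIntegrable (fun s => sinDir (s - x) (D s)) volume u v := by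
  have hm : Measurable fun s => sinDir (s - x) (D s) := by
    have := hD.measurable
    unfold sinDir
    fun_prop
  rw [intervalIntegrable_iff]
  refine MeasureTheory.Measure.integrableOn_of_bounded (M := 1) (by simp) hm.aestronglyMeasurable ?_
  exact Filter.Eventually.of_forall fun s => abs_sinDir_le_one _ _



/-- The integral over the perimeter of the vertical component of the unit vector pointing from the
perimeter to `(x, y)`: the derivative of `flatPerim` in `y`, wherever that exists. -/
def force (a p h x y : ℝ) : ℝ :=
  (∫ s in (0:ℝ)..a, sinDir (s - x) y) +
  √(1 + (h / p) ^ 2) * (∫ s in (0:ℝ)..p, sinDir (s - x) (y - tent a p h s)) +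
  √(1 + (h / (a - p)) ^ 2) * (∫ s in p..a, sinDir (s - x) (y - tent a p h s))

lemma flatPerim_sub_le {a p h x y y' : ℝ} (hp : 0 < p) (hpa : p < a) :
    flatPerim a p h x y' - flatPerim a p h x y ≤ force a p h x y' * (y' - y) := by
  have key : ∀ D D' : ℝ → ℝ, Continuous D → Continuous D' → (∀ s, D' s - D s = y' - y) →
      ∀ u v : ℝ, u ≤ v →
      (∫ s in u..v, √((s - x) ^ 2 + D' s ^ 2)) - (∫ s in u..v, √((s - x) ^ 2 + D s ^ 2)) ≤
        (∫ s in u..v, sinDir (s - x) (D' s)) * (y' - y) := by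
    intro D D' hD hD' hdd u v huv
    rw [← intervalIntegral.integral_sub
      ((by fun_prop : Continuous _).intervalIntegrable _ _)
      ((by fun_prop : Continuous _).intervalIntegrable _ _),
      ← intervalIntegral.integral_mul_const]
    refine intervalIntegral.integral_mono_on huv
      ((by fun_prop : Continuous _).intervalIntegrable _ _)
      ((intervalIntegrable_sinDir hD' x u v).mul_const _) fun s _ => ?_
    rw [← hdd s]
    exact sqrt_sub_sqrt_le _ _ _
  have ht := continuous_tent a p h
  have k1 := key (fun _ => y) (fun _ => y') (by fun_prop) (by fun_prop) (fun _ => rfl) 0 a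
    (by linarith)
  have k2 := key (fun s => y - tent a p h s) (fun s => y' - tent a p h s) (by fun_prop)
    (by fun_prop) (fun _ => by ring) 0 p hp.le
  have k3 := key (fun s => y - tent a p h s) (fun s => y' - tent a p h s) (by fun_prop)
    (by fun_prop) (fun _ => by ring) p a hpa.le
  have k2' := mul_le_mul_of_nonneg_left k2 (Real.sqrt_nonneg (1 + (h / p) ^ 2))
  have k3' := mul_le_mul_of_nonneg_left k3 (Real.sqrt_nonneg (1 + (h / (a - p)) ^ 2))
  unfold flatPerim force
  linarith

/-- The pull of two horizontal segments at heights comparable with `R` differs by a multiple of the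
logarithm of `1 / R`, coming from the part of the segments further than `R` from the point. -/
lemma integral_sinDir_gap {a x R D₁ D₂ : ℝ} (hR : 0 < R) (hx : 0 ≤ x) (hxa : x + R ≤ a)
    (hD : D₂ ≤ D₁) (h1 : |D₁| ≤ R) (h2 : |D₂| ≤ R) :
    (D₁ - D₂) / 4 * Real.log ((a - x) / R) ≤
      (∫ s in (0:ℝ)..a, sinDir (s - x) D₁) - ∫ s in (0:ℝ)..a, sinDir (s - x) D₂ := by
  have i1 := intervalIntegrable_sinDir (D := fun _ => D₁) continuous_const x
  have i2 := intervalIntegrable_sinDir (D := fun _ => D₂) continuous_const x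
  rw [← intervalIntegral.integral_sub (i1 _ _) (i2 _ _),
    ← intervalIntegral.integral_add_adjacent_intervals (b := x + R)
      ((i1 _ _).sub (i2 _ _)) ((i1 _ _).sub (i2 _ _))]
  have n1 : 0 ≤ ∫ s in (0:ℝ)..(x + R), (sinDir (s - x) D₁ - sinDir (s - x) D₂) :=
    intervalIntegral.integral_nonneg (by linarith) fun s _ => sub_nonneg.2 (sinDir_mono _ hD)
  have e : ∫ s in (x + R)..a, (D₁ - D₂) / 4 * (s - x)⁻¹ =
      (D₁ - D₂) / 4 * Real.log ((a - x) / R) := by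
    rw [intervalIntegral.integral_const_mul,
      intervalIntegral.integral_comp_sub_right (fun s => s⁻¹) x,
      integral_inv_of_pos (by linarith) (by linarith)]
    simp
  have n2 : ∫ s in (x + R)..a, (D₁ - D₂) / 4 * (s - x)⁻¹ ≤
      ∫ s in (x + R)..a, (sinDir (s - x) D₁ - sinDir (s - x) D₂) := by
    refine intervalIntegral.integral_mono_on hxa ?_ ((i1 _ _).sub (i2 _ _)) fun s hs => ?_
    · refine ContinuousOn.intervalIntegrable ?_
      rw [Set.uIcc_of_le hxa]
      refine continuousOn_const.mul (ContinuousOn.inv₀ (by fun_prop) fun s hs => ?_)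
      have := hs.1
      exact (by linarith : 0 < s - x).ne'
    · have := hs.1
      exact le_sinDir_sub (by linarith) hD (by linarith) (by linarith)
  linarith

lemma abs_integral_sinDir_le {D : ℝ → ℝ} (x : ℝ) {u v : ℝ} (huv : u ≤ v) :
    |∫ s in u..v, sinDir (s - x) (D s)| ≤ v - u := by
  have := intervalIntegral.norm_integral_le_of_norm_le_const (a := u) (b := v) (C := 1)
    (f := fun s => sinDir (s - x) (D s)) fun s _ => abs_sinDir_le_one _ _
  rwa [Real.norm_eq_abs, one_mul, abs_of_nonneg (sub_nonneg.2 huv)] at this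

lemma one_le_sqrt_one_add_sq (k : ℝ) : 1 ≤ √(1 + k ^ 2) :=
  Real.one_le_sqrt.2 (by nlinarith [sq_nonneg k])

lemma sqrt_one_add_sq_le {k : ℝ} (hk : 0 ≤ k) : √(1 + k ^ 2) ≤ 1 + k :=
  (Real.sqrt_le_left (by linarith)).2 (by nlinarith)

lemma abs_sinDir_sub_le {σ D₁ D₂ : ℝ} (hσ : σ ≠ 0) :
    |sinDir σ D₁ - sinDir σ D₂| ≤ |D₁ - D₂| / |σ| := by
  rcases le_total D₂ D₁ with hD | hD
  · rw [abs_of_nonneg (sub_nonneg.2 (sinDir_mono σ hD)), abs_of_nonneg (sub_nonneg.2 hD)]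
    exact sinDir_sub_le hσ hD
  · rw [abs_sub_comm, abs_sub_comm D₁, abs_of_nonneg (sub_nonneg.2 (sinDir_mono σ hD)),
      abs_of_nonneg (sub_nonneg.2 hD)]
    exact sinDir_sub_le hσ hD

lemma sinDir_neg (σ D : ℝ) : sinDir σ (-D) = -sinDir σ D := by
  unfold sinDir; rw [neg_sq, neg_div]

/-- Up to `O(h)`, the sides `CA` and `AB` act like the horizontal segment at the height of the tent
over `x`: at distance `|s - x|` the heights differ by `O(h |s - x|)`, which changes the direction by
`O(h)`, and the arc length factors are `1 + O(h)`. -/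
lemma abs_force_sub_le {a p h K : ℝ} (hp : 0 < p) (hpa : p < a) (hh : 0 < h) (hK : 1 / p ≤ K)
    (hK' : 1 / (a - p) ≤ K) (x y : ℝ) :
    |force a p h x y - ((∫ s in (0:ℝ)..a, sinDir (s - x) y) -
      ∫ s in (0:ℝ)..a, sinDir (s - x) (tent a p h x - y))| ≤ h * (K * a + 2) := by
  have hap : 0 < a - p := by linarith
  have ht := continuous_tent a p h
  have hK0 : 0 ≤ K := le_trans (by positivity) hK
  have ii := intervalIntegrable_sinDir (D := fun s => y - tent a p h s) (by fun_prop) x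
  have ic := intervalIntegrable_sinDir (D := fun _ => y - tent a p h x) (by fun_prop) x
  have hneg : ∫ s in (0:ℝ)..a, sinDir (s - x) (tent a p h x - y) =
      -∫ s in (0:ℝ)..a, sinDir (s - x) (y - tent a p h x) := by
    rw [← intervalIntegral.integral_neg]
    congr 1; ext s
    rw [← sinDir_neg, neg_sub]
  have hsum := intervalIntegral.integral_add_adjacent_intervals (ii 0 p) (ii p a)
  have hdiff : |(∫ s in (0:ℝ)..a, sinDir (s - x) (y - tent a p h s)) -
      ∫ s in (0:ℝ)..a, sinDir (s - x) (y - tent a p h x)| ≤ K * h * a := by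
    rw [← intervalIntegral.integral_sub (ii _ _) (ic _ _)]
    have := intervalIntegral.norm_integral_le_of_norm_le_const (a := 0) (b := a) (C := K * h)
      (f := fun s => sinDir (s - x) (y - tent a p h s) - sinDir (s - x) (y - tent a p h x))
      fun s _ => ?_
    · rwa [Real.norm_eq_abs, sub_zero, abs_of_pos (hp.trans hpa)] at this
    · rcases eq_or_ne s x with rfl | hsx
      · simp only [sub_self, norm_zero]; positivity
      · have hsx' : s - x ≠ 0 := sub_ne_zero.2 hsx
        refine (abs_sinDir_sub_le hsx').trans ?_
        rw [div_le_iff₀ (abs_pos.2 hsx'),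
          show y - tent a p h s - (y - tent a p h x) = -(tent a p h s - tent a p h x) by ring,
          abs_neg]
        exact tent_lipschitz hp hpa hh hK hK' s x
  have b1 := abs_integral_sinDir_le (D := fun s => y - tent a p h s) x hp.le
  have b2 := abs_integral_sinDir_le (D := fun s => y - tent a p h s) x hpa.le
  have w1 := one_le_sqrt_one_add_sq (h / p)
  have w2 := one_le_sqrt_one_add_sq (h / (a - p))
  have w1' := sqrt_one_add_sq_le (k := h / p) (by positivity)
  have w2' := sqrt_one_add_sq_le (k := h / (a - p)) (by positivity)
  unfold force
  rw [hneg]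
  set I₁ := ∫ s in (0:ℝ)..p, sinDir (s - x) (y - tent a p h s)
  set I₂ := ∫ s in p..a, sinDir (s - x) (y - tent a p h s)
  have c1 : |(√(1 + (h / p) ^ 2) - 1) * I₁| ≤ h := by
    rw [abs_mul, abs_of_nonneg (by linarith)]
    calc _ ≤ h / p * (p - 0) := by gcongr; linarith
      _ = h := by field_simp; ring
  have c2 : |(√(1 + (h / (a - p)) ^ 2) - 1) * I₂| ≤ h := by
    rw [abs_mul, abs_of_nonneg (by linarith)]
    calc _ ≤ h / (a - p) * (a - p) := by gcongr; linarith
      _ = h := by field_simp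
  rw [← hsum] at hdiff
  rw [abs_le] at *
  constructor <;> nlinarith [c1.1, c1.2, c2.1, c2.2, hdiff.1, hdiff.2]

/-! ### Horizontal position of the median -/

lemma integral_abs_sub {a x : ℝ} (hx : 0 ≤ x) (hxa : x ≤ a) :
    ∫ s in (0:ℝ)..a, |s - x| = a ^ 2 / 4 + (x - a / 2) ^ 2 := by
  have hc : Continuous fun s : ℝ => |s - x| := by fun_prop
  rw [← intervalIntegral.integral_add_adjacent_intervals (b := x)
    (hc.intervalIntegrable _ _) (hc.intervalIntegrable _ _)]
  have e1 : ∫ s in (0:ℝ)..x, |s - x| = ∫ s in (0:ℝ)..x, (x - s) := by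
    refine intervalIntegral.integral_congr fun s hs => ?_
    rw [Set.uIcc_of_le hx] at hs
    rw [abs_of_nonpos (by linarith [hs.2])]; ring
  have e2 : ∫ s in x..a, |s - x| = ∫ s in x..a, (s - x) := by
    refine intervalIntegral.integral_congr fun s hs => ?_
    rw [Set.uIcc_of_le hxa] at hs
    rw [abs_of_nonneg (by linarith [hs.1])]
  rw [e1, e2, intervalIntegral.integral_sub (by simp) (by simp),
    intervalIntegral.integral_sub (by simp) (by simp)]
  simp
  ring

lemma le_integral_abs_sub {a x : ℝ} (ha : 0 < a) (hx : x < 0 ∨ a < x) :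
    a ^ 2 / 2 ≤ ∫ s in (0:ℝ)..a, |s - x| := by
  have hc : Continuous fun s : ℝ => |s - x| := by fun_prop
  rcases hx with hx | hx
  · have : ∫ s in (0:ℝ)..a, s ≤ ∫ s in (0:ℝ)..a, |s - x| :=
      intervalIntegral.integral_mono_on ha.le (by simp) (hc.intervalIntegrable _ _)
        fun s _ => (by linarith : s ≤ s - x).trans (le_abs_self _)
    simpa using this
  · have : ∫ s in (0:ℝ)..a, (a - s) ≤ ∫ s in (0:ℝ)..a, |s - x| :=
      intervalIntegral.integral_mono_on ha.le
        ((by fun_prop : Continuous _).intervalIntegrable _ _) (hc.intervalIntegrable _ _)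
        fun s _ => (by linarith : a - s ≤ -(s - x)).trans (neg_le_abs _)
    have e : ∫ s in (0:ℝ)..a, (a - s) = a ^ 2 / 2 := by
      rw [intervalIntegral.integral_sub (by simp) (by simp)]
      simp
      ring
    rwa [e] at this

lemma le_flatPerim {a p h : ℝ} (hp : 0 < p) (hpa : p < a) (x y : ℝ) :
    2 * ∫ s in (0:ℝ)..a, |s - x| ≤ flatPerim a p h x y := by
  have ht := continuous_tent a p h
  have key : ∀ D : ℝ → ℝ, Continuous D → ∀ u v : ℝ, u ≤ v →
      ∫ s in u..v, |s - x| ≤ ∫ s in u..v, √((s - x) ^ 2 + D s ^ 2) := fun D hD u v huv =>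
    intervalIntegral.integral_mono_on huv
      ((by fun_prop : Continuous _).intervalIntegrable _ _)
      ((by fun_prop : Continuous _).intervalIntegrable _ _)
      fun s _ => Real.abs_le_sqrt (by nlinarith [sq_nonneg (D s)])
  have hc : Continuous fun s : ℝ => |s - x| := by fun_prop
  have hsum := intervalIntegral.integral_add_adjacent_intervals
    (hc.intervalIntegrable (μ := volume) 0 p) (hc.intervalIntegrable p a)
  have k1 := key (fun _ => y) (by fun_prop) 0 a (by linarith)
  have k2 := key (fun s => y - tent a p h s) (by fun_prop) 0 p hp.le
  have k3 := key (fun s => y - tent a p h s) (by fun_prop) p a hpa.le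
  have n2 : 0 ≤ ∫ s in (0:ℝ)..p, √((s - x) ^ 2 + (y - tent a p h s) ^ 2) :=
    intervalIntegral.integral_nonneg hp.le fun s _ => Real.sqrt_nonneg _
  have n3 : 0 ≤ ∫ s in p..a, √((s - x) ^ 2 + (y - tent a p h s) ^ 2) :=
    intervalIntegral.integral_nonneg hpa.le fun s _ => Real.sqrt_nonneg _
  have m2 := le_mul_of_one_le_left n2 (one_le_sqrt_one_add_sq (h / p))
  have m3 := le_mul_of_one_le_left n3 (one_le_sqrt_one_add_sq (h / (a - p)))
  unfold flatPerim
  linarith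

lemma flatPerim_center_le {a p h : ℝ} (hp : 0 < p) (hpa : p < a) (hh : 0 < h) :
    flatPerim a p h (a / 2) 0 ≤ a ^ 2 / 2 + 2 * a * h + 2 * h ^ 2 := by
  have hap : 0 < a - p := by linarith
  have ht := continuous_tent a p h
  have hc : Continuous fun s : ℝ => |s - a / 2| := by fun_prop
  have hsum := intervalIntegral.integral_add_adjacent_intervals
    (hc.intervalIntegrable (μ := volume) 0 p) (hc.intervalIntegrable p a)
  have htot : ∫ s in (0:ℝ)..a, |s - a / 2| = a ^ 2 / 4 := by
    rw [integral_abs_sub (by linarith) (by linarith)]; ring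
  have k1 : ∫ s in (0:ℝ)..a, √((s - a / 2) ^ 2 + 0 ^ 2) = ∫ s in (0:ℝ)..a, |s - a / 2| := by
    simp [Real.sqrt_sq_eq_abs]
  have key : ∀ u v : ℝ, 0 ≤ u → u < v → v ≤ a →
      √(1 + (h / (v - u)) ^ 2) * ∫ s in u..v, √((s - a / 2) ^ 2 + (0 - tent a p h s) ^ 2) ≤
        (∫ s in u..v, |s - a / 2|) + h * (v - u) + h * (a / 2 + h) := by
    intro u v hu huv hva
    have huv' : 0 < v - u := by linarith
    have pt : ∀ s ∈ Set.Icc u v, √((s - a / 2) ^ 2 + (0 - tent a p h s) ^ 2) ≤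
        |s - a / 2| + h := by
      intro s hs
      have t0 := tent_nonneg hp hpa hh (hu.trans hs.1) (hs.2.trans hva)
      have t1 : tent a p h s ≤ h := tent_le hp hpa hh
      refine (Real.sqrt_le_left (by positivity)).2 ?_
      rw [add_sq, sq_abs]
      have := abs_nonneg (s - a / 2)
      nlinarith
    have j1 : ∫ s in u..v, √((s - a / 2) ^ 2 + (0 - tent a p h s) ^ 2) ≤
        ∫ s in u..v, (|s - a / 2| + h) :=
      intervalIntegral.integral_mono_on huv.le
        ((by fun_prop : Continuous _).intervalIntegrable _ _)
        ((by fun_prop : Continuous _).intervalIntegrable _ _) pt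
    have e1 : ∫ s in u..v, (|s - a / 2| + h) = (∫ s in u..v, |s - a / 2|) + h * (v - u) := by
      rw [intervalIntegral.integral_add (hc.intervalIntegrable _ _) (by simp)]
      simp [mul_comm]
    have j2 : ∫ s in u..v, √((s - a / 2) ^ 2 + (0 - tent a p h s) ^ 2) ≤
        ∫ s in u..v, (a / 2 + h) := by
      refine intervalIntegral.integral_mono_on huv.le
        ((by fun_prop : Continuous _).intervalIntegrable _ _) (by simp) fun s hs => ?_
      have : |s - a / 2| ≤ a / 2 := abs_le.2 ⟨by linarith [hs.1], by linarith [hs.2]⟩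
      linarith [pt s hs]
    have n : 0 ≤ ∫ s in u..v, √((s - a / 2) ^ 2 + (0 - tent a p h s) ^ 2) :=
      intervalIntegral.integral_nonneg huv.le fun s _ => Real.sqrt_nonneg _
    rw [intervalIntegral.integral_const, smul_eq_mul] at j2
    have w := sqrt_one_add_sq_le (k := h / (v - u)) (by positivity)
    set I := ∫ s in u..v, √((s - a / 2) ^ 2 + (0 - tent a p h s) ^ 2)
    calc _ ≤ (1 + h / (v - u)) * I := by gcongr
      _ = I + h / (v - u) * I := by ring
      _ ≤ I + h / (v - u) * ((v - u) * (a / 2 + h)) := by gcongr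
      _ = I + h * (a / 2 + h) := by field_simp
      _ ≤ _ := by linarith
  have k2 := key 0 p le_rfl hp hpa.le
  have k3 := key p a hp.le hpa le_rfl
  rw [sub_zero] at k2
  unfold flatPerim
  rw [k1]
  nlinarith

/-! ### The limit in adapted coordinates -/

/-- Both coordinates of the median, the vertical one in units of the height of the triangle, converge
as the triangle flattens. -/
lemma tendsto_flat_median {a b c : ℝ} (hc : 0 < c) (hcb : c ≤ b) (habc : a = b + c)
    {u p h x y : ℕ → ℝ} (hu : Tendsto u atTop (nhds a)) (hp : Tendsto p atTop (nhds b))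
    (hh : Tendsto h atTop (nhds 0)) (hpos : ∀ n, 0 < h n)
    (hmin : ∀ᶠ n in atTop, ∀ x' y',
      flatPerim (u n) (p n) (h n) (x n) (y n) ≤ flatPerim (u n) (p n) (h n) x' y') :
    Tendsto x atTop (nhds (a / 2)) ∧
      Tendsto (fun n => y n / h n) atTop (nhds (a / (4 * b))) := by
  have hb : 0 < b := hc.trans_le hcb
  have ha : 0 < a := by linarith
  have ep : ∀ᶠ n in atTop, 0 < p n := hp.eventually_const_lt hb
  have hup : Tendsto (fun n => u n - p n) atTop (nhds c) := by
    have := hu.sub hp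
    rwa [habc, add_sub_cancel_left] at this
  have epu : ∀ᶠ n in atTop, p n < u n := by
    filter_upwards [hup.eventually_const_lt hc] with n hn using by linarith
  have hx : Tendsto x atTop (nhds (a / 2)) := by
    have herr : Tendsto (fun n => u n * h n + h n ^ 2) atTop (nhds 0) := by
      simpa using (hu.mul hh).add (hh.pow 2)
    have hsmall : ∀ᶠ n in atTop, u n * h n + h n ^ 2 < u n ^ 2 / 4 := by
      have h1 : Tendsto (fun n => u n ^ 2 / 4) atTop (nhds (a ^ 2 / 4)) := (hu.pow 2).div_const 4
      exact herr.eventually_lt h1 (by positivity)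
    have hsq : ∀ᶠ n in atTop, (x n - u n / 2) ^ 2 ≤ u n * h n + h n ^ 2 := by
      filter_upwards [ep, epu, hsmall, hmin] with n hpn hpun hsn hmn
      have h1 := le_flatPerim (h := h n) hpn hpun (x n) (y n)
      have h2 := flatPerim_center_le hpn hpun (hpos n)
      have h3 := hmn (u n / 2) 0
      by_cases hout : x n < 0 ∨ u n < x n
      · have := le_integral_abs_sub (hpn.trans hpun) hout
        linarith
      · push Not at hout
        rw [integral_abs_sub hout.1 hout.2] at h1
        linarith
    have h0 : Tendsto (fun n => (x n - u n / 2) ^ 2) atTop (nhds 0) :=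
      squeeze_zero' (Eventually.of_forall fun n => sq_nonneg _) hsq herr
    have h1 : Tendsto (fun n => x n - u n / 2) atTop (nhds 0) := by
      rw [tendsto_zero_iff_abs_tendsto_zero]
      have := h0.sqrt
      simpa [Real.sqrt_sq_eq_abs, Function.comp_def] using this
    simpa using h1.add (hu.div_const 2)
  refine ⟨hx, ?_⟩
  have hτ : Tendsto (fun n => tent (u n) (p n) (h n) (x n) / h n) atTop (nhds (a / (2 * b))) := by
    have h1 : Tendsto (fun n => min (x n / p n) ((u n - x n) / (u n - p n))) atTop
        (nhds (min (a / 2 / b) ((a - a / 2) / c))) :=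
      (hx.div hp hb.ne').min ((hu.sub hx).div hup hc.ne')
    -- the midpoint of the base lies under the longer slope of the tent because `c ≤ b`
    have h2 : min (a / 2 / b) ((a - a / 2) / c) = a / (2 * b) := by
      rw [sub_half, min_eq_left (by gcongr), div_div]
    rw [h2] at h1
    refine h1.congr fun n => ?_
    have := hpos n
    unfold tent
    rw [← min_div_div_right this.le]
    congr 1 <;> field_simp
  have hxpos : ∀ᶠ n in atTop, 0 ≤ x n :=
    (hx.eventually_const_lt (by positivity : 0 < a / 2)).mono fun _ => le_of_lt
  have hux : Tendsto (fun n => u n - x n) atTop (nhds (a / 2)) := by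
    have := hu.sub hx
    rwa [sub_half] at this
  have hRu : ∀ᶠ n in atTop, x n + 3 * h n ≤ u n := by
    have h1 : Tendsto (fun n => 3 * h n) atTop (nhds 0) := by simpa using hh.const_mul 3
    filter_upwards [h1.eventually_lt hux (by positivity)] with n hn using by linarith
  have hlog : Tendsto (fun n => Real.log ((u n - x n) / (3 * h n))) atTop atTop := by
    refine Real.tendsto_log_atTop.comp ?_
    have hinv : Tendsto (fun n => (h n)⁻¹) atTop atTop :=
      tendsto_inv_nhdsGT_zero.comp
        (tendsto_nhdsWithin_iff.2 ⟨hh, Eventually.of_forall hpos⟩)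
    refine ((hux.div_const 3).pos_mul_atTop (by positivity) hinv).congr fun n => ?_
    rw [div_mul_eq_div_div, div_eq_mul_inv (_ / 3)]
  set K := 2 / c with hK
  have hK1 : ∀ᶠ n in atTop, 1 / p n ≤ K := by
    filter_upwards [hp.eventually_const_lt (by linarith : c / 2 < b)] with n hn
    rw [hK, show 2 / c = 1 / (c / 2) by field_simp]
    gcongr
  have hK2 : ∀ᶠ n in atTop, 1 / (u n - p n) ≤ K := by
    filter_upwards [hup.eventually_const_lt (by linarith : c / 2 < c)] with n hn
    rw [hK, show 2 / c = 1 / (c / 2) by field_simp]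
    gcongr
  have hK0 : 0 < K := by positivity
  have hua : ∀ᶠ n in atTop, u n ≤ 2 * a :=
    (hu.eventually_lt_const (by linarith : a < 2 * a)).mono fun _ => le_of_lt
  -- signs of the force at height `η h`, on either side of `η = a / (4 b)`
  have hforce : ∀ η : ℝ, 0 ≤ η → η ≤ 1 →
      (a / (4 * b) < η → ∀ᶠ n in atTop, 0 < force (u n) (p n) (h n) (x n) (η * h n)) ∧
      (η < a / (4 * b) → ∀ᶠ n in atTop, force (u n) (p n) (h n) (x n) (η * h n) < 0) := by
    intro η hη0 hη1
    have common : ∀ᶠ n in atTop, |η * h n| ≤ 3 * h n ∧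
        |tent (u n) (p n) (h n) (x n) - η * h n| ≤ 3 * h n ∧
        |force (u n) (p n) (h n) (x n) (η * h n) -
          ((∫ s in (0:ℝ)..u n, sinDir (s - x n) (η * h n)) - ∫ s in (0:ℝ)..u n,
            sinDir (s - x n) (tent (u n) (p n) (h n) (x n) - η * h n))| ≤
          h n * (K * (2 * a) + 2) := by
      filter_upwards [ep, epu, hxpos, hRu, hK1, hK2, hua] with n hpn hpun hxn hRn hk1 hk2 hun
      have hhn := hpos n
      have t0 := tent_nonneg hpn hpun hhn hxn (by linarith)
      have t1 : tent (u n) (p n) (h n) (x n) ≤ h n := tent_le hpn hpun hhn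
      have q0 : 0 ≤ η * h n := by positivity
      have q1 : η * h n ≤ 1 * h n := by gcongr
      refine ⟨abs_le.2 ⟨by linarith, by linarith⟩, abs_le.2 ⟨by linarith, by linarith⟩, ?_⟩
      refine (abs_force_sub_le hpn hpun hhn hk1 hk2 (x n) (η * h n)).trans ?_
      gcongr
    have hgap : Tendsto (fun n => 2 * η - tent (u n) (p n) (h n) (x n) / h n) atTop
        (nhds (2 * (η - a / (4 * b)))) := by
      have : 2 * (η - a / (4 * b)) = 2 * η - a / (2 * b) := by field_simp; ring
      rw [this]
      exact hτ.const_sub _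
    constructor
    · intro hη
      have hδ : 0 < η - a / (4 * b) := by linarith
      set δ := η - a / (4 * b)
      filter_upwards [common, hxpos, hRu, hgap.eventually_const_lt (by linarith : δ < 2 * δ),
        hlog.eventually_gt_atTop ((K * (2 * a) + 2) / (δ / 4))] with n hn hxn hRn hgn hln
      obtain ⟨A1, A2, A3⟩ := hn
      have hhn := hpos n
      have hd : δ * h n ≤ η * h n - (tent (u n) (p n) (h n) (x n) - η * h n) := by
        have := mul_lt_mul_of_pos_right hgn hhn
        rw [sub_mul _ (_ / h n), div_mul_cancel₀ _ hhn.ne'] at this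
        linarith
      have hdp : 0 < δ * h n := by positivity
      have J := integral_sinDir_gap (by positivity : 0 < 3 * h n) hxn hRn (by linarith) A1 A2
      rw [div_lt_iff₀ (by positivity)] at hln
      have hl0 : 0 ≤ Real.log ((u n - x n) / (3 * h n)) :=
        Real.log_nonneg ((one_le_div (by positivity)).2 (by linarith))
      have J2 := mul_le_mul_of_nonneg_right hd hl0
      have J3 := mul_lt_mul_of_pos_left hln hhn
      have := (abs_le.1 A3).1
      nlinarith
    · intro hη
      have hδ : 0 < a / (4 * b) - η := by linarith
      set δ := a / (4 * b) - η with hδd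
      filter_upwards [common, hxpos, hRu,
        hgap.eventually_lt_const (by linarith : 2 * (η - a / (4 * b)) < -δ),
        hlog.eventually_gt_atTop ((K * (2 * a) + 2) / (δ / 4))] with n hn hxn hRn hgn hln
      obtain ⟨A1, A2, A3⟩ := hn
      have hhn := hpos n
      have hd : δ * h n ≤ tent (u n) (p n) (h n) (x n) - η * h n - η * h n := by
        have := mul_lt_mul_of_pos_right hgn hhn
        rw [sub_mul _ (_ / h n), div_mul_cancel₀ _ hhn.ne'] at this
        linarith
      have hdp : 0 < δ * h n := by positivity
      have J := integral_sinDir_gap (by positivity : 0 < 3 * h n) hxn hRn (by linarith) A2 A1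
      rw [div_lt_iff₀ (by positivity)] at hln
      have hl0 : 0 ≤ Real.log ((u n - x n) / (3 * h n)) :=
        Real.log_nonneg ((one_le_div (by positivity)).2 (by linarith))
      have J2 := mul_le_mul_of_nonneg_right hd hl0
      have J3 := mul_lt_mul_of_pos_left hln hhn
      have := (abs_le.1 A3).2
      nlinarith
  have hl0 : 0 < a / (4 * b) := by positivity
  have hl1 : a / (4 * b) ≤ 1 / 2 := by
    rw [div_le_iff₀ (by positivity)]; linarith
  refine tendsto_order.2 ⟨fun v hv => ?_, fun v hv => ?_⟩
  -- if `y ≤ v h` with `v` below the limit, raising the point to a height `η h` in between,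
  -- where the force is still negative, lowers the functional; similarly from above
  · obtain ⟨η, hvη, hηl⟩ := exists_between (max_lt hv hl0)
    rw [max_lt_iff] at hvη
    filter_upwards [(hforce η hvη.2.le (by linarith)).2 hηl, ep, epu, hmin] with n hf hpn hpun hmn
    have hhn := hpos n
    by_contra! hcon
    rw [div_le_iff₀ hhn] at hcon
    have h1 := flatPerim_sub_le (h := h n) (x := x n) (y := y n) (y' := η * h n) hpn hpun
    have h2 := hmn (x n) (η * h n)
    have h3 : 0 < η * h n - y n := by nlinarith [hvη.1]
    nlinarith
  · obtain ⟨η, hlη, hηv⟩ := exists_between (lt_min hv (by linarith : a / (4 * b) < 1))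
    rw [lt_min_iff] at hηv
    filter_upwards [(hforce η (by linarith) hηv.2.le).1 hlη, ep, epu, hmin] with n hf hpn hpun hmn
    have hhn := hpos n
    by_contra! hcon
    rw [le_div_iff₀ hhn] at hcon
    have h1 := flatPerim_sub_le (h := h n) (x := x n) (y := y n) (y' := η * h n) hpn hpun
    have h2 := hmn (x n) (η * h n)
    have h3 : 0 < y n - η * h n := by nlinarith [hηv.1]
    nlinarith

/-! ### Adapted coordinates -/

/-- Orthonormal coordinates `φ`, `ψ` with `φ` along `B - C` and oriented so that `A` lies on the
positive side of the line `BC`. -/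
lemma exists_frame {A B C : Plane} (hABC : AffineIndependent ℝ ![A, B, C]) :
    ∃ φ ψ : Plane →ₗ[ℝ] ℝ, (∀ w, ‖w‖ = √(φ w ^ 2 + ψ w ^ 2)) ∧
      φ (B - C) = ‖B - C‖ ∧ ψ (B - C) = 0 ∧ 0 < ψ (A - C) ∧
      (∀ w, φ w = inner ℝ (B - C) w / ‖B - C‖) ∧ ∀ r t : ℝ, ∃ w, φ w = r ∧ ψ w = t := by
  have hncol : ¬ Collinear ℝ {A, B, C} := affineIndependent_iff_not_collinear_set.1 hABC
  have hBC : B - C ≠ 0 := by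
    intro h0
    rw [sub_eq_zero.1 h0] at hncol
    exact hncol (by simpa using collinear_pair ℝ A C)
  have hpos : 0 < ‖B - C‖ := norm_pos_iff.2 hBC
  have hnd : ∀ w : Plane, ‖w‖ ^ 2 = w 0 ^ 2 + w 1 ^ 2 := fun w => by
    simp [EuclideanSpace.norm_sq_eq]
  set d := B - C with hd
  have hd2 := hnd d
  have hinn : ∀ v w : Plane, inner ℝ v w = v 0 * w 0 + v 1 * w 1 := fun v w => by
    simp [PiLp.inner_apply, mul_comm]
  have hin := hinn d
  let φ : Plane →ₗ[ℝ] ℝ := ‖d‖⁻¹ • (innerₛₗ ℝ d)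
  -- the quarter turn of `d`
  let J : Plane := !₂[-d 1, d 0]
  let ψ₀ : Plane →ₗ[ℝ] ℝ := ‖d‖⁻¹ • (innerₛₗ ℝ J)
  have hφ : ∀ w, φ w = (d 0 * w 0 + d 1 * w 1) / ‖d‖ := fun w => by
    simp [φ, hin, div_eq_inv_mul]
  have hψ₀ : ∀ w, ψ₀ w = (d 0 * w 1 - d 1 * w 0) / ‖d‖ := fun w => by
    change ‖d‖⁻¹ * inner ℝ J w = _
    rw [hinn, div_eq_inv_mul]
    simp only [J, Matrix.cons_val_zero, Matrix.cons_val_one]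
    ring
  have hne : ψ₀ (A - C) ≠ 0 := by
    intro h0
    rw [hψ₀, div_eq_zero_iff, or_iff_left hpos.ne', sub_eq_zero] at h0
    apply hncol
    rw [collinear_iff_of_mem (p₀ := C) (by simp)]
    refine ⟨d, ?_⟩
    simp only [Set.mem_insert_iff, Set.mem_singleton_iff, forall_eq_or_imp, forall_eq]
    refine ⟨⟨(d 0 * (A - C) 0 + d 1 * (A - C) 1) / ‖d‖ ^ 2, ?_⟩, ⟨1, by simp [hd]⟩,
      ⟨0, by simp⟩⟩
    rw [vadd_eq_add, ← sub_eq_iff_eq_add]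
    have h2 : d 0 ^ 2 + d 1 ^ 2 ≠ 0 := by rw [← hd2]; positivity
    ext i
    rw [hd2]
    fin_cases i
    · simp only [Fin.zero_eta, PiLp.smul_apply, smul_eq_mul]
      field_simp
      linear_combination (-d 1) * h0
    · simp only [Fin.mk_one, PiLp.smul_apply, smul_eq_mul]
      field_simp
      linear_combination (d 0) * h0
  obtain ⟨σ, hσ, hσA⟩ : ∃ σ : ℝ, σ ^ 2 = 1 ∧ 0 < σ * ψ₀ (A - C) := by
    rcases lt_or_gt_of_ne hne with h | h
    · exact ⟨-1, by norm_num, by linarith⟩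
    · exact ⟨1, by norm_num, by linarith⟩
  clear_value φ ψ₀
  refine ⟨φ, σ • ψ₀, fun w => ?_, ?_, ?_, by simpa using hσA, fun w => by rw [hφ, hin], ?_⟩
  · rw [eq_comm, Real.sqrt_eq_iff_mul_self_eq (by positivity) (norm_nonneg _), ← sq, hnd w,
      LinearMap.smul_apply, smul_eq_mul σ, mul_pow, hσ, one_mul, hφ, hψ₀, div_pow, div_pow, hd2]
    have h2 : d 0 ^ 2 + d 1 ^ 2 ≠ 0 := by rw [← hd2]; positivity
    field_simp
    ring
  · rw [hφ, ← sq, ← sq, ← hd2, sq, mul_div_assoc, div_self hpos.ne', mul_one]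
  · rw [LinearMap.smul_apply, hψ₀]; simp [mul_comm]
  · intro r t
    refine ⟨(r / ‖d‖) • d + (σ * t / ‖d‖) • J, ?_, ?_⟩
    · rw [hφ]
      simp [J]
      field_simp
      rw [hd2]; ring
    · rw [LinearMap.smul_apply, hψ₀]
      simp [J]
      field_simp
      rw [hd2]
      linear_combination (t * (d 0 ^ 2 + d 1 ^ 2)) * hσ

lemma perimDist_eq_flatPerim {A B C : Plane} {φ ψ : Plane →ₗ[ℝ] ℝ}
    (hn : ∀ w, ‖w‖ = √(φ w ^ 2 + ψ w ^ 2)) (hφ : φ (B - C) = ‖B - C‖) (hψ : ψ (B - C) = 0)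
    (hh : 0 < ψ (A - C)) (hp : 0 < φ (A - C)) (hpa : φ (A - C) < ‖B - C‖) (X : Plane) :
    perimDist A B C X =
      flatPerim ‖B - C‖ (φ (A - C)) (ψ (A - C)) (φ (X - C)) (ψ (X - C)) := by
  set a := ‖B - C‖
  set p := φ (A - C) with hpd
  set h := ψ (A - C) with hhd
  set x := φ (X - C) with hxd
  set y := ψ (X - C) with hyd
  have ha : 0 < a := hp.trans hpa
  have hap : 0 < a - p := by linarith
  have side : ∀ k l : ℝ, 0 < k → √(k ^ 2 + l ^ 2) = k * √(1 + (l / k) ^ 2) := fun k l hk => by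
    rw [show k ^ 2 + l ^ 2 = k ^ 2 * (1 + (l / k) ^ 2) by field_simp,
      Real.sqrt_mul (by positivity), Real.sqrt_sq hk.le]
  have eBC : a * ∫ t in (0:ℝ)..1, ‖(1 - t) • B + t • C - X‖ =
      ∫ s in (0:ℝ)..a, √((s - x) ^ 2 + y ^ 2) := by
    have h1 : ∀ t : ℝ, ‖(1 - t) • B + t • C - X‖ = √((a - a * t - x) ^ 2 + y ^ 2) := fun t => by
      rw [show (1 - t) • B + t • C - X = (1 - t) • (B - C) - (X - C) by module, hn]
      simp only [map_sub, map_smul, smul_eq_mul] at *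
      simp only [hφ, hψ, ← hxd, ← hyd]
      congr 1; ring
    simp_rw [h1]
    rw [intervalIntegral.integral_comp_sub_mul (fun s => √((s - x) ^ 2 + y ^ 2)) ha.ne',
      smul_eq_mul, mul_inv_cancel_left₀ ha.ne']
    simp
  have eCA : ‖C - A‖ * ∫ t in (0:ℝ)..1, ‖(1 - t) • C + t • A - X‖ =
      √(1 + (h / p) ^ 2) * ∫ s in (0:ℝ)..p, √((s - x) ^ 2 + (y - tent a p h s) ^ 2) := by
    have h1 : ∫ t in (0:ℝ)..1, ‖(1 - t) • C + t • A - X‖ =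
        ∫ t in (0:ℝ)..1, √((t * p - x) ^ 2 + (y - tent a p h (t * p)) ^ 2) := by
      refine intervalIntegral.integral_congr fun t ht => ?_
      rw [Set.uIcc_of_le zero_le_one] at ht
      have e : (1 - t) • C + t • A - X = t • (A - C) - (X - C) := by module
      have ht' : tent a p h (t * p) = t * h := by
        rw [tent_left hp hpa hh (by nlinarith [ht.2])]
        field_simp
      simp only [e, hn, ht', map_sub φ (t • _), map_sub ψ (t • _), map_smul, smul_eq_mul, ← hpd,
        ← hhd, ← hxd, ← hyd]
      congr 1; ring
    rw [h1, intervalIntegral.integral_comp_mul_right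
      (fun s => √((s - x) ^ 2 + (y - tent a p h s) ^ 2)) hp.ne', norm_sub_rev, hn (A - C), ← hpd,
      ← hhd, side p h hp]
    simp only [smul_eq_mul, zero_mul, one_mul]
    field_simp
  have eAB : ‖A - B‖ * ∫ t in (0:ℝ)..1, ‖(1 - t) • A + t • B - X‖ =
      √(1 + (h / (a - p)) ^ 2) * ∫ s in p..a, √((s - x) ^ 2 + (y - tent a p h s) ^ 2) := by
    have h1 : ∫ t in (0:ℝ)..1, ‖(1 - t) • A + t • B - X‖ =
        ∫ t in (0:ℝ)..1, √(((a - p) * t + p - x) ^ 2 +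
          (y - tent a p h ((a - p) * t + p)) ^ 2) := by
      refine intervalIntegral.integral_congr fun t ht => ?_
      rw [Set.uIcc_of_le zero_le_one] at ht
      have e : (1 - t) • A + t • B - X = (1 - t) • (A - C) + t • (B - C) - (X - C) := by module
      have ht' : tent a p h ((a - p) * t + p) = (1 - t) * h := by
        rw [tent_right hp hpa hh (by nlinarith [ht.1])]
        field_simp; ring
      simp only [e, hn, ht', map_sub φ (_ + _), map_sub ψ (_ + _), map_add, map_smul, smul_eq_mul,
        ← hpd, ← hhd, ← hxd, ← hyd, hφ, hψ]
      congr 1; ring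
    have e2 : A - B = (A - C) - (B - C) := by abel
    have e3 : ‖A - B‖ = (a - p) * √(1 + (h / (a - p)) ^ 2) := by
      rw [← side (a - p) h hap, hn, e2, map_sub φ (A - C), map_sub ψ (A - C), hφ, hψ, ← hpd, ← hhd]
      congr 1; ring
    rw [h1, intervalIntegral.integral_comp_mul_add
      (fun s => √((s - x) ^ 2 + (y - tent a p h s) ^ 2)) hap.ne', e3]
    simp only [smul_eq_mul, mul_zero, zero_add, mul_one, sub_add_cancel]
    field_simp
  unfold perimDist flatPerim
  rw [eBC, eCA, eAB]
  ring

/-- For a degenerate triangle there is a well-defined triple of barycentric coordinates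
of the geometric median of the perimeter: the barycentric coordinates of the medians
of any approximating sequence of nondegenerate triangles converge to it, and the limit
does not depend on the approximating sequence. -/
theorem median_perimeter_degenerate_limit
    (a b c : ℝ) (hba : b ≤ a) (hcb : c ≤ b) (hc : 0 < c) (habc : a = b + c)
    (A B C : Plane) (hcfg : DegenConfig a b c A B C) :
    ∃ l1 l2 l3 : ℝ, l1 + l2 + l3 = 1 ∧
      ∀ (An Bn Cn : ℕ → Plane),
        (∀ n, AffineIndependent ℝ ![An n, Bn n, Cn n]) →
        Tendsto An atTop (nhds A) → Tendsto Bn atTop (nhds B) →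
        Tendsto Cn atTop (nhds C) →
        ∀ mn : ℕ → Plane,
          (∀ n, ∀ X : Plane,
            perimDist (An n) (Bn n) (Cn n) (mn n) ≤ perimDist (An n) (Bn n) (Cn n) X) →
          ∀ μ1 μ2 μ3 : ℕ → ℝ,
            (∀ n, μ1 n + μ2 n + μ3 n = 1) →
            (∀ n, mn n = μ1 n • An n + μ2 n • Bn n + μ3 n • Cn n) →
            Tendsto μ1 atTop (nhds l1) ∧ Tendsto μ2 atTop (nhds l2) ∧
              Tendsto μ3 atTop (nhds l3) := by
  obtain ⟨-, hBC, hCA, hAB⟩ := hcfg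
  have hb : 0 < b := hc.trans_le hcb
  have ha : 0 < a := by linarith
  refine ⟨a / (4 * b), 1 / 4, 1 - a / (4 * b) - 1 / 4, by ring, ?_⟩
  intro An Bn Cn hind hA hB hC mn hmin μ1 μ2 μ3 hμ hbary
  choose φ ψ hn hφ hψ hh hin hsurj using fun n => exists_frame (hind n)
  have hu : Tendsto (fun n => ‖Bn n - Cn n‖) atTop (nhds a) := hBC ▸ (hB.sub hC).norm
  have hACn : Tendsto (fun n => ‖An n - Cn n‖) atTop (nhds b) := by
    rw [norm_sub_rev] at hCA
    exact hCA ▸ (hA.sub hC).norm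
  have hp : Tendsto (fun n => φ n (An n - Cn n)) atTop (nhds b) := by
    have h1 : inner ℝ (B - C) (A - C) = a * b := by
      have h2 := norm_sub_sq_real (B - C) (A - C)
      rw [sub_sub_sub_cancel_right, norm_sub_rev B A, norm_sub_rev A C, hBC, hCA, hAB] at h2
      rw [habc] at h2 ⊢
      linarith
    have h2 := ((hB.sub hC).inner (hA.sub hC)).div hu ha.ne'
    rw [h1, mul_div_cancel_left₀ _ ha.ne'] at h2
    exact h2.congr fun n => (hin n _).symm
  have hh0 : Tendsto (fun n => ψ n (An n - Cn n)) atTop (nhds 0) := by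
    have h1 := ((hACn.pow 2).sub (hp.pow 2)).sqrt
    rw [sub_self, Real.sqrt_zero] at h1
    refine h1.congr fun n => ?_
    rw [hn n, Real.sq_sqrt (by positivity), add_sub_cancel_left, Real.sqrt_sq (hh n).le]
  have hflat : ∀ᶠ n in atTop, ∀ x' y',
      flatPerim ‖Bn n - Cn n‖ (φ n (An n - Cn n)) (ψ n (An n - Cn n))
        (φ n (mn n - Cn n)) (ψ n (mn n - Cn n)) ≤
      flatPerim ‖Bn n - Cn n‖ (φ n (An n - Cn n)) (ψ n (An n - Cn n)) x' y' := by
    filter_upwards [hp.eventually_const_lt hb, hp.eventually_lt hu (by linarith)]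
      with n hpn hpun x' y'
    obtain ⟨w, hw1, hw2⟩ := hsurj n x' y'
    have h1 := hmin n (w + Cn n)
    rwa [perimDist_eq_flatPerim (hn n) (hφ n) (hψ n) (hh n) hpn hpun,
      perimDist_eq_flatPerim (hn n) (hφ n) (hψ n) (hh n) hpn hpun, add_sub_cancel_right, hw1,
      hw2] at h1
  obtain ⟨hx, hy⟩ := tendsto_flat_median hc hcb habc hu hp hh0 hh hflat
  have hm : ∀ n, mn n - Cn n = μ1 n • (An n - Cn n) + μ2 n • (Bn n - Cn n) := fun n => by
    rw [hbary n, show μ3 n = 1 - μ1 n - μ2 n by linarith [hμ n]]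
    module
  have h1 : Tendsto μ1 atTop (nhds (a / (4 * b))) := by
    refine hy.congr fun n => ?_
    rw [hm n, map_add, map_smul, map_smul, hψ n, smul_zero, add_zero, smul_eq_mul,
      mul_div_cancel_right₀ _ (hh n).ne']
  have h2 : Tendsto μ2 atTop (nhds (1 / 4)) := by
    have h3 := (hx.sub (h1.mul hp)).div hu ha.ne'
    have e : (a / 2 - a / (4 * b) * b) / a = 1 / 4 := by field_simp; norm_num
    rw [e] at h3
    refine h3.congr' ?_
    filter_upwards [hu.eventually_const_lt ha] with n hun
    simp only [Pi.div_apply]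
    rw [hm n, map_add, map_smul, map_smul, hφ n, smul_eq_mul, smul_eq_mul, add_sub_cancel_left,
      mul_div_cancel_right₀ _ hun.ne']
  refine ⟨h1, h2, ?_⟩
  refine ((h1.const_sub 1).sub h2).congr fun n => ?_
  linarith [hμ n]
end
end

section
/- Let a ≥ b ≥ c > 0 with a = b + c, and let A, B, C ∈ ℝ² be a degenerate triangle configuration with these side lengths. Then there exist reals λ₁, λ₂, λ₃ with λ₁ + λ₂ + λ₃ = 1 such that for every sequence (Aₙ, Bₙ, Cₙ) of affinely independent triples in ℝ² with Aₙ → A, Bₙ → B, Cₙ → C, and every choice of global minimizers mₙ of the area distance functional of the triangle AₙBₙCₙ, the barycentric coordinates of mₙ with respect to (Aₙ, Bₙ, Cₙ) converge to (λ₁, λ₂, λ₃). In particular the limit does not depend on the approximating sequence. -/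
/-!
Parametrize the triangle `Aₙ Bₙ Cₙ` by `P = Aₙ + s (Bₙ - Aₙ) + t (Cₙ - Aₙ)` with `(s, t)` in the
reference triangle `T` (`areaDist_eq`). Splitting a vector into its components along and across
`Cₙ - Aₙ` gives `‖s (Bₙ - Aₙ) + t (Cₙ - Aₙ)‖² = (p s + q t)² + h² s²` (`norm_comb_eq`), where
`p → -c`, `q → b` and `0 < h → 0`. So the question concerns minimizers `(σ, τ)` of
`∫_T √((p (s - σ) + q (t - τ))² + h² (s - σ)²)` in this regime.

*First order.* The functional is approximately `∫_T |-c s + b t - x|` with `x = p σ + q τ`. The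
derivative of this integral is minus the difference of the areas on both sides of the line
`-c s + b t = x`, which changes sign exactly at `x = b - β`, `β² = (b + c) b / 2`
(`imbalance_neg`, `imbalance_pos`). Hence `p σ + q τ → b - β` (`tendsto_of_lineDist`).

*Second order.* The limit functional is constant along the line `-c s + b t = b - β`, and the
position on it is selected by the derivative in that direction, proportional to
`∫_T (s - σ) / √((p s + q t - x)² + h² (s - σ)²)`. Integrating out `t` produces differences of
`arsinh`, which blow up like `log (1 / h)` where the line crosses the vertical section of `T`, and
stay of lower order elsewhere. After division by `log (1 / h)` dominated convergence yields a
multiple of `∫ (s - σ) ds` over the chord `0 ≤ s ≤ β / (b + c)` (`tendsto_moment`). It changes sign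
at the midpoint of the chord, so the minimizers converge to that midpoint (`tendsto_coord`).

No differentiation of the functional is needed: convexity, in the form of the tangent inequalities
`abs_sub_ge` and `sqrt_tangent` at a fixed comparison point, turns the sign of the first-order
quantity there into a one-sided bound on the minimizer.
-/

open MeasureTheory Metric Filter

noncomputable section

section Auxiliary

open Set Topology

/-! ### Affine coordinates on a triangle -/

/-- The reference triangle with vertices `(0,0)`, `(1,0)`, `(0,1)`. -/
def refTri : Set (ℝ × ℝ) := {z | 0 ≤ z.1 ∧ 0 ≤ z.2 ∧ z.1 + z.2 ≤ 1}

lemma refTri_isClosed : IsClosed refTri := by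
  have h1 : IsClosed {z : ℝ × ℝ | 0 ≤ z.1} := isClosed_le continuous_const continuous_fst
  have h2 : IsClosed {z : ℝ × ℝ | 0 ≤ z.2} := isClosed_le continuous_const continuous_snd
  have h3 : IsClosed {z : ℝ × ℝ | z.1 + z.2 ≤ 1} :=
    isClosed_le (continuous_fst.add continuous_snd) continuous_const
  exact h1.inter (h2.inter h3)

lemma refTri_measurableSet : MeasurableSet refTri := refTri_isClosed.measurableSet

lemma refTri_subset : refTri ⊆ Icc (0 : ℝ) 1 ×ˢ Icc (0 : ℝ) 1 := by
  rintro ⟨s, t⟩ ⟨h1, h2, h3⟩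
  simp only at h1 h2 h3
  exact ⟨⟨h1, by simp only; linarith⟩, ⟨h2, by simp only; linarith⟩⟩

lemma refTri_isCompact : IsCompact refTri :=
  (isCompact_Icc.prod isCompact_Icc).of_isClosed_subset refTri_isClosed refTri_subset

lemma refTri_lt_top : volume refTri < ⊤ := refTri_isCompact.measure_lt_top

lemma linIndep_of_affineIndep {A B C : Plane} (h : AffineIndependent ℝ ![A, B, C]) (s t : ℝ)
    (hst : s • (B - A) + t • (C - A) = 0) : s = 0 ∧ t = 0 := by
  rw [affineIndependent_iff] at h
  have := h Finset.univ ![-(s + t), s, t] (by simp [Fin.sum_univ_three]) (by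
    simp only [Fin.sum_univ_three, Matrix.cons_val_zero, Matrix.cons_val_one, Matrix.cons_val]
    rw [← hst]; module)
  exact ⟨by simpa using this 1 (by simp), by simpa using this 2 (by simp)⟩

lemma convexHull_triple_eq_image (A B C : Plane) :
    convexHull ℝ ({A, B, C} : Set Plane) =
      (fun z : ℝ × ℝ => A + (z.1 • (B - A) + z.2 • (C - A))) '' refTri := by
  apply Subset.antisymm
  · apply convexHull_min
    · rintro x (rfl | rfl | rfl)
      · exact ⟨(0, 0), by simp [refTri], by simp⟩
      · exact ⟨(1, 0), by simp [refTri], by simp⟩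
      · exact ⟨(0, 1), by simp [refTri], by simp⟩
    · rintro _ ⟨z, ⟨hz1, hz2, hz3⟩, rfl⟩ _ ⟨w, ⟨hw1, hw2, hw3⟩, rfl⟩ a b ha hb hab
      refine ⟨(a * z.1 + b * w.1, a * z.2 + b * w.2), ⟨by positivity, by positivity, ?_⟩, ?_⟩
      · simp only
        nlinarith
      · obtain rfl : b = 1 - a := by linarith
        simp only
        module
  · rintro _ ⟨z, ⟨hz1, hz2, hz3⟩, rfl⟩
    have hA : A ∈ convexHull ℝ ({A, B, C} : Set Plane) := subset_convexHull _ _ (by simp)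
    have hB : B ∈ convexHull ℝ ({A, B, C} : Set Plane) := subset_convexHull _ _ (by simp)
    have hC : C ∈ convexHull ℝ ({A, B, C} : Set Plane) := subset_convexHull _ _ (by simp)
    have := (convex_convexHull ℝ ({A, B, C} : Set Plane)).sum_mem (t := Finset.univ)
      (w := ![1 - z.1 - z.2, z.1, z.2]) (z := ![A, B, C])
      (by intro i _; fin_cases i <;> simp <;> linarith)
      (by simp [Fin.sum_univ_three]; ring)
      (by intro i _; fin_cases i <;> simpa)
    convert this using 1
    simp only [Fin.sum_univ_three, Matrix.cons_val_zero, Matrix.cons_val_one, Matrix.cons_val]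
    module

/-- Up to a positive Jacobian factor, the area functional of a nondegenerate triangle is an
integral over the reference triangle. The factor is the ratio of two Haar measures; its value is
irrelevant for the location of minimizers. -/
lemma areaDist_eq {A B C : Plane} (h : AffineIndependent ℝ ![A, B, C]) :
    ∃ k : ℝ, 0 < k ∧ ∀ σ τ : ℝ, areaDist A B C (A + (σ • (B - A) + τ • (C - A))) =
      k * ∫ z in refTri, ‖(z.1 - σ) • (B - A) + (z.2 - τ) • (C - A)‖ := by
  let L : (ℝ × ℝ) →ₗ[ℝ] Plane :=
    (LinearMap.fst ℝ ℝ ℝ).smulRight (B - A) + (LinearMap.snd ℝ ℝ ℝ).smulRight (C - A)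
  have hLa : ∀ z, L z = z.1 • (B - A) + z.2 • (C - A) := fun z => by simp [L]
  have hinj : Function.Injective L := by
    rw [← LinearMap.ker_eq_bot, LinearMap.ker_eq_bot']
    intro z hz
    rw [hLa] at hz
    exact Prod.ext (linIndep_of_affineIndep h _ _ hz).1 (linIndep_of_affineIndep h _ _ hz).2
  let e : (ℝ × ℝ) ≃L[ℝ] Plane :=
    (LinearEquiv.ofInjectiveOfFinrankEq L hinj (by simp)).toContinuousLinearEquiv
  have hea : ∀ z, e z = z.1 • (B - A) + z.2 • (C - A) := fun z => by
    rw [← hLa]; rfl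
  have hH : (Measure.map e (volume : Measure (ℝ × ℝ))).IsAddHaarMeasure :=
    e.isAddHaarMeasure_map volume
  have hvol := Measure.isAddLeftInvariant_eq_smul (volume : Measure Plane)
    (Measure.map e (volume : Measure (ℝ × ℝ)))
  set κ := Measure.addHaarScalarFactor (volume : Measure Plane)
    (Measure.map e (volume : Measure (ℝ × ℝ))) with hκ
  have hκpos : 0 < κ := Measure.addHaarScalarFactor_pos_of_isAddHaarMeasure _ _
  let f : (ℝ × ℝ) ≃ₜ Plane := e.toHomeomorph.trans (Homeomorph.addLeft A)
  have hfa : ∀ z, f z = A + (z.1 • (B - A) + z.2 • (C - A)) := fun z => by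
    rw [← hea]; rfl
  have hmap : (volume : Measure Plane) = κ • Measure.map f (volume : Measure (ℝ × ℝ)) := by
    have h1 : Measure.map f (volume : Measure (ℝ × ℝ)) =
        Measure.map (fun x => A + x) (Measure.map e (volume : Measure (ℝ × ℝ))) := by
      rw [Measure.map_map (by fun_prop) (by fun_prop)]; rfl
    rw [h1, map_add_left_eq_self]
    exact hvol
  refine ⟨κ, by exact_mod_cast hκpos, fun σ τ => ?_⟩
  unfold areaDist
  have himg : convexHull ℝ ({A, B, C} : Set Plane) = f '' refTri := by
    rw [convexHull_triple_eq_image]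
    apply image_congr
    intro z _
    rw [hfa]
  rw [himg, hmap, Measure.restrict_smul, integral_smul_nnreal_measure,
    f.measurableEmbedding.setIntegral_map, preimage_image_eq _ f.injective, NNReal.smul_def, smul_eq_mul]
  congr 2
  ext z
  rw [hfa]
  congr 1
  module

/-! ### Integration over the reference triangle -/

lemma integrableOn_refTri_of_bound {f : ℝ × ℝ → ℝ} (hf : Measurable f) (C : ℝ)
    (hC : ∀ z ∈ refTri, |f z| ≤ C) : IntegrableOn f refTri :=
  Measure.integrableOn_of_bounded (M := C) refTri_lt_top.ne hf.aestronglyMeasurable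
    ((ae_restrict_iff' refTri_measurableSet).2 (ae_of_all _ hC))

lemma integrableOn_refTri_of_continuous {f : ℝ × ℝ → ℝ} (hf : Continuous f) :
    IntegrableOn f refTri := hf.continuousOn.integrableOn_compact refTri_isCompact

lemma integral_refTri {f : ℝ × ℝ → ℝ} (hf : IntegrableOn f refTri) :
    ∫ z in refTri, f z = ∫ s in (0 : ℝ)..1, ∫ t in (0 : ℝ)..(1 - s), f (s, t) := by
  rw [← integral_indicator refTri_measurableSet, Measure.volume_eq_prod, integral_prod]
  swap
  · rw [← Measure.volume_eq_prod]
    exact (integrable_indicator_iff refTri_measurableSet).2 hf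
  rw [intervalIntegral.integral_of_le zero_le_one, ← integral_Icc_eq_integral_Ioc,
    ← integral_indicator measurableSet_Icc]
  congr 1
  ext s
  by_cases hs : s ∈ Icc (0 : ℝ) 1
  · rw [indicator_of_mem hs, intervalIntegral.integral_of_le (by linarith [hs.2]),
      ← integral_Icc_eq_integral_Ioc, ← integral_indicator measurableSet_Icc]
    congr 1
    ext t
    have : (s, t) ∈ refTri ↔ t ∈ Icc 0 (1 - s) :=
      ⟨fun h => ⟨h.2.1, by linarith [h.2.2]⟩, fun h => ⟨hs.1, h.1, by linarith [h.2]⟩⟩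
    simp only [indicator, this]
  · rw [indicator_of_notMem hs]
    refine integral_eq_zero_of_ae (ae_of_all _ fun t => ?_)
    refine indicator_of_notMem (fun h => hs ?_) _
    exact (refTri_subset h).1

/-! ### First order: the median of the projected area -/

/-- A measurable subgradient of the absolute value on `ℝ`. -/
def sgn (y : ℝ) : ℝ := if 0 ≤ y then 1 else -1

lemma measurable_sgn : Measurable sgn :=
  Measurable.ite measurableSet_Ici measurable_const measurable_const

lemma abs_sgn_le (y : ℝ) : |sgn y| ≤ 1 := by
  unfold sgn; split_ifs <;> simp

/-- The tangent inequality for `x ↦ |y - x|` at `x'`. -/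
lemma abs_sub_ge (y x x' : ℝ) : |y - x'| - sgn (y - x') * (x - x') ≤ |y - x| := by
  unfold sgn
  split_ifs with h
  · rw [abs_of_nonneg h]
    linarith [le_abs_self (y - x)]
  · rw [abs_of_neg (not_le.1 h)]
    linarith [neg_abs_le (y - x)]

lemma hasDerivAt_abs_sgn {y : ℝ} (hy : y ≠ 0) : HasDerivAt (fun x : ℝ => |x|) (sgn y) y := by
  unfold sgn
  rcases lt_or_gt_of_ne hy with h | h
  · rw [if_neg (not_le.2 h)]; exact hasDerivAt_abs_neg h
  · rw [if_pos h.le]; exact hasDerivAt_abs_pos h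

lemma integral_sgn {q : ℝ} (hq : 0 < q) (w m : ℝ) :
    ∫ t in (0 : ℝ)..m, sgn (q * t + w) = (|q * m + w| - |w|) / q := by
  have key := integral_eq_of_hasDerivAt_off_countable (fun t => |q * t + w| / q)
    (fun t => sgn (q * t + w)) (a := 0) (b := m) (s := {-w / q}) (countable_singleton _)
    (by fun_prop) (fun t ht => by
      have hne : q * t + w ≠ 0 := fun h => ht.2 (by
        rw [mem_singleton_iff, eq_div_iff hq.ne']; linarith)
      have h1 : HasDerivAt (fun t => q * t + w) q t := by
        simpa using ((hasDerivAt_id t).const_mul q).add_const w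
      have := ((hasDerivAt_abs_sgn hne).comp t h1).div_const q
      rwa [mul_div_cancel_right₀ _ hq.ne'] at this)
    (by
      rw [intervalIntegrable_iff]
      exact Measure.integrableOn_of_bounded (M := 1) (by simp)
        (measurable_sgn.comp (by fun_prop)).aestronglyMeasurable
        (ae_of_all _ fun t => abs_sgn_le _))
  rw [key]
  simp only [mul_zero, zero_add]
  ring

lemma integral_abs_affine {α κ : ℝ} (hα : 0 ≤ α) (hακ : α ≤ κ) (hκ : 0 < κ) :
    ∫ s in (0 : ℝ)..1, |α - κ * s| = (α ^ 2 + (κ - α) ^ 2) / (2 * κ) := by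
  have key := integral_eq_of_hasDerivAt_off_countable
    (fun s => -((α - κ * s) * |α - κ * s|) / (2 * κ))
    (fun s => |α - κ * s|) (a := 0) (b := 1) (s := {α / κ}) (countable_singleton _)
    (by fun_prop) (fun s hs => by
      have hne : α - κ * s ≠ 0 := fun h => hs.2 (by
        rw [mem_singleton_iff, eq_div_iff hκ.ne']; linarith)
      have h1 : HasDerivAt (fun s => α - κ * s) (-κ) s := by
        simpa using ((hasDerivAt_id s).const_mul κ).const_sub α
      have h2 := ((h1.mul ((hasDerivAt_abs_sgn hne).comp s h1)).neg).div_const (2 * κ)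
      have h3 : (α - κ * s) * sgn (α - κ * s) = |α - κ * s| := by
        unfold sgn
        split_ifs with h
        · rw [abs_of_nonneg h]; ring
        · rw [abs_of_neg (not_le.1 h)]; ring
      refine h2.congr_deriv ?_
      rw [div_eq_iff (by positivity)]
      simp only [Function.comp_apply]
      linear_combination κ * h3)
    (by apply Continuous.intervalIntegrable; fun_prop)
  rw [key]
  simp only [mul_zero, sub_zero, mul_one]
  rw [abs_of_nonneg hα, abs_of_nonpos (by linarith)]
  ring

/-- The signed imbalance of the line `{-c s + b t = x}` cutting the reference triangle: the area on
the side `-c s + b t ≥ x` minus the area on the other side. -/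
def imbalance (b c x : ℝ) : ℝ := ∫ z in refTri, sgn (-c * z.1 + b * z.2 - x)

lemma imbalance_eq {b c : ℝ} (hb : 0 < b) (x : ℝ) :
    imbalance b c x = ((∫ s in (0 : ℝ)..1, |(b - x) - (b + c) * s|) -
      ∫ s in (0 : ℝ)..1, |-x - c * s|) / b := by
  have hint : IntegrableOn (fun z : ℝ × ℝ => sgn (-c * z.1 + b * z.2 - x)) refTri :=
    integrableOn_refTri_of_bound (measurable_sgn.comp (by fun_prop)) 1 fun z _ => abs_sgn_le _
  unfold imbalance
  rw [integral_refTri hint,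
    ← intervalIntegral.integral_sub (by apply Continuous.intervalIntegrable; fun_prop)
    (by apply Continuous.intervalIntegrable; fun_prop), ← intervalIntegral.integral_div]
  congr 1
  ext s
  have := integral_sgn hb (-c * s - x) (1 - s)
  rw [show b * (1 - s) + (-c * s - x) = b - x - (b + c) * s by ring,
    show -c * s - x = -x - c * s by ring] at this
  rw [← this]
  congr 1
  ext t
  congr 1
  ring

/-- For `0 ≤ x` the quantity `-x - c s` has constant sign on `0 ≤ s ≤ 1`. -/
lemma imbalance_of_nonneg {b c x : ℝ} (hb : 0 < b) (hc : 0 < c) (hx0 : 0 ≤ x) (hxb : x ≤ b) :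
    b * imbalance b c x = (b - x) ^ 2 / (b + c) - b / 2 := by
  have h2 : ∫ s in (0 : ℝ)..1, |-x - c * s| = x + c / 2 := by
    have : ∫ s in (0 : ℝ)..1, |-x - c * s| = ∫ s in (0 : ℝ)..1, (x + c * s) := by
      apply intervalIntegral.integral_congr
      intro s hs
      rw [uIcc_of_le zero_le_one] at hs
      have := mul_nonneg hc.le hs.1
      simp only
      rw [abs_of_nonpos (by linarith)]
      ring
    rw [this, intervalIntegral.integral_add (by simp)
      (by apply Continuous.intervalIntegrable; fun_prop), intervalIntegral.integral_const_mul,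
      integral_id]
    simp
    ring
  rw [imbalance_eq hb, integral_abs_affine (by linarith) (by linarith) (by linarith), h2]
  field_simp
  ring

lemma imbalance_of_nonpos {b c x : ℝ} (hb : 0 < b) (hc : 0 < c) (hxc : -c ≤ x) (hx0 : x ≤ 0) :
    b * imbalance b c x = (b - x) ^ 2 / (b + c) - b / 2 - x ^ 2 / c := by
  rw [imbalance_eq hb, integral_abs_affine (by linarith) (by linarith) (by linarith),
    integral_abs_affine (by linarith) (by linarith) (by linarith)]
  field_simp
  ring

lemma imbalance_neg {b c β x : ℝ} (hc : 0 < c) (hcb : c ≤ b) (hβ0 : 0 < β)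
    (hβ : β ^ 2 = (b + c) * b / 2) (h1 : b - β < x) (h2 : x < b) : imbalance b c x < 0 := by
  have hb : 0 < b := hc.trans_le hcb
  have hβb : β ≤ b := by nlinarith
  have h3 := imbalance_of_nonneg hb hc (by linarith) h2.le
  have h4 : (b - x) ^ 2 / (b + c) < b / 2 := by
    rw [div_lt_iff₀ (by linarith)]
    nlinarith
  nlinarith

lemma imbalance_pos {b c β x : ℝ} (hc : 0 < c) (hcb : c ≤ b) (hβ0 : 0 < β)
    (hβ : β ^ 2 = (b + c) * b / 2) (h1 : x < b - β) (h2 : -c < x) : 0 < imbalance b c x := by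
  have hb : 0 < b := hc.trans_le hcb
  rcases le_or_gt 0 x with h0 | h0
  · have h3 := imbalance_of_nonneg hb hc h0 (by linarith)
    have h4 : b / 2 < (b - x) ^ 2 / (b + c) := by
      rw [lt_div_iff₀ (by linarith)]
      nlinarith
    nlinarith
  · have h3 := imbalance_of_nonpos hb hc h2.le h0.le
    have h4 : 0 < (b - x) ^ 2 / (b + c) - b / 2 - x ^ 2 / c := by
      have e : (b - x) ^ 2 / (b + c) - b / 2 - x ^ 2 / c =
        (b * c * (b - c) / 2 + (-x) * b * (2 * c + x)) / ((b + c) * c) := by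
        field_simp
        ring
      rw [e]
      apply div_pos _ (by positivity)
      have : 0 ≤ b * c * (b - c) / 2 := by
        have : 0 ≤ b - c := by linarith
        positivity
      have : 0 < (-x) * b * (2 * c + x) :=
        mul_pos (mul_pos (by linarith) hb) (by linarith)
      linarith
    nlinarith

/-- The limit functional: the mean distance to `x` of the projected (degenerate) triangle. -/
def lineDist (b c x : ℝ) : ℝ := ∫ z in refTri, |-c * z.1 + b * z.2 - x|

/-- `-imbalance b c x'` is a subgradient of the convex function `lineDist b c` at `x'`. -/
lemma lineDist_sub_ge (b c x x' : ℝ) :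
    -(imbalance b c x' * (x - x')) ≤ lineDist b c x - lineDist b c x' := by
  have hs : IntegrableOn (fun z : ℝ × ℝ => sgn (-c * z.1 + b * z.2 - x')) refTri :=
    integrableOn_refTri_of_bound (measurable_sgn.comp (by fun_prop)) 1 fun z _ => abs_sgn_le _
  have ha : ∀ y, IntegrableOn (fun z : ℝ × ℝ => |-c * z.1 + b * z.2 - y|) refTri := fun y =>
    integrableOn_refTri_of_continuous (by fun_prop)
  have : ∫ z in refTri, (|-c * z.1 + b * z.2 - x'| - sgn (-c * z.1 + b * z.2 - x') * (x - x')) ≤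
      lineDist b c x :=
    integral_mono ((ha x').sub (hs.mul_const _)) (ha x) fun z => abs_sub_ge _ _ _
  rw [integral_sub (ha x') (hs.mul_const _), integral_mul_const] at this
  unfold imbalance
  unfold lineDist at this ⊢
  linarith

/-- Approximate minimizers of the limit functional converge to the median `b - β` of the projected
area. -/
lemma tendsto_of_lineDist {b c β : ℝ} (hc : 0 < c) (hcb : c ≤ b) (hβ0 : 0 < β)
    (hβ : β ^ 2 = (b + c) * b / 2) {x : ℕ → ℝ}
    (hx : ∀ x', ∃ E : ℕ → ℝ, Tendsto E atTop (𝓝 0) ∧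
      ∀ n, lineDist b c (x n) ≤ lineDist b c x' + E n) :
    Tendsto x atTop (𝓝 (b - β)) := by
  have hb : 0 < b := hc.trans_le hcb
  have hβb : β ≤ b := by nlinarith
  rw [tendsto_order]
  constructor
  · intro y hy
    obtain ⟨x', h1, h2⟩ : ∃ x', max y (-c) < x' ∧ x' < b - β :=
      exists_between (max_lt hy (by linarith))
    rw [max_lt_iff] at h1
    obtain ⟨E, hE, hEx⟩ := hx x'
    have hD := imbalance_pos hc hcb hβ0 hβ h2 h1.2
    filter_upwards [hE.eventually_lt_const (mul_pos hD (sub_pos.2 h1.1))] with n hn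
    have := lineDist_sub_ge b c (x n) x'
    have := hEx n
    by_contra! hcon
    nlinarith
  · intro y hy
    obtain ⟨x', h1, h2⟩ : ∃ x', b - β < x' ∧ x' < min y b :=
      exists_between (lt_min hy (by linarith))
    rw [lt_min_iff] at h2
    obtain ⟨E, hE, hEx⟩ := hx x'
    have hD := imbalance_neg hc hcb hβ0 hβ h1 h2.2
    filter_upwards [hE.eventually_lt_const (mul_pos (neg_pos.2 hD) (sub_pos.2 h2.1))] with n hn
    have := lineDist_sub_ge b c (x n) x'
    have := hEx n
    by_contra! hcon
    nlinarith

/-! ### Logarithmic asymptotics of `arsinh` -/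

lemma integral_inv_sqrt {q η : ℝ} (hq : 0 < q) (hη : 0 < η) (w m : ℝ) :
    ∫ t in (0 : ℝ)..m, (√((q * t + w) ^ 2 + η ^ 2))⁻¹ =
      (Real.arsinh ((q * m + w) / η) - Real.arsinh (w / η)) / q := by
  have hpos : ∀ y : ℝ, 0 < √(y ^ 2 + η ^ 2) := fun y => Real.sqrt_pos.2 (by positivity)
  have key := intervalIntegral.integral_eq_sub_of_hasDerivAt
    (f := fun t => Real.arsinh ((q * t + w) / η) / q)
    (f' := fun t => (√((q * t + w) ^ 2 + η ^ 2))⁻¹) (a := 0) (b := m)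
    (fun t _ => by
      have h1 : HasDerivAt (fun t => (q * t + w) / η) (q / η) t := by
        simpa using (((hasDerivAt_id t).const_mul q).add_const w).div_const η
      refine (h1.arsinh.div_const q).congr_deriv ?_
      have h2 : √((q * t + w) ^ 2 + η ^ 2) = η * √(1 + ((q * t + w) / η) ^ 2) := by
        rw [show (q * t + w) ^ 2 + η ^ 2 = η ^ 2 * (1 + ((q * t + w) / η) ^ 2) by
          field_simp; ring, Real.sqrt_mul (by positivity), Real.sqrt_sq hη.le]
      have h3 : √(1 + ((q * t + w) / η) ^ 2) ≠ 0 := (Real.sqrt_pos.2 (by positivity)).ne'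
      rw [h2, smul_eq_mul]
      field_simp)
    (by
      apply Continuous.intervalIntegrable
      exact Continuous.inv₀ (by fun_prop) fun t => (hpos _).ne')
  rw [key]
  simp only [mul_zero, zero_add]
  ring

lemma arsinh_div_eq {h : ℝ} (hh : 0 < h) (y : ℝ) :
    Real.arsinh (y / h) = Real.log (y + √(h ^ 2 + y ^ 2)) - Real.log h := by
  have h0 : 0 < y + √(h ^ 2 + y ^ 2) := by
    have : |y| < √(h ^ 2 + y ^ 2) := by
      rw [← Real.sqrt_sq_eq_abs]
      exact Real.sqrt_lt_sqrt (sq_nonneg y) (by nlinarith)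
    linarith [neg_abs_le y]
  rw [Real.arsinh, ← Real.log_div h0.ne' hh.ne']
  congr 1
  rw [show h ^ 2 + y ^ 2 = h ^ 2 * (1 + (y / h) ^ 2) by field_simp, Real.sqrt_mul (by positivity),
    Real.sqrt_sq hh.le]
  field_simp

lemma tendsto_neg_log {h : ℕ → ℝ} (hh : ∀ n, 0 < h n) (hlim : Tendsto h atTop (𝓝 0)) :
    Tendsto (fun n => -Real.log (h n)) atTop atTop :=
  tendsto_neg_atBot_atTop.comp (Real.tendsto_log_nhdsGT_zero.comp
    (tendsto_nhdsWithin_iff.2 ⟨hlim, Eventually.of_forall hh⟩))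

lemma tendsto_arsinh_div_log_of_pos {h z : ℕ → ℝ} {z₀ : ℝ} (hh : ∀ n, 0 < h n)
    (hlim : Tendsto h atTop (𝓝 0)) (hz : Tendsto z atTop (𝓝 z₀)) (hz₀ : 0 < z₀) :
    Tendsto (fun n => Real.arsinh (z n / h n) / -Real.log (h n)) atTop (𝓝 1) := by
  have hL := tendsto_neg_log hh hlim
  have h1 : Tendsto (fun n => Real.log (z n + √(h n ^ 2 + z n ^ 2))) atTop
      (𝓝 (Real.log (z₀ + √(0 ^ 2 + z₀ ^ 2)))) := by
    refine Tendsto.log (hz.add ((hlim.pow 2).add (hz.pow 2)).sqrt) ?_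
    positivity
  have h2 := (h1.div_atTop hL).add_const 1
  rw [zero_add] at h2
  refine h2.congr' ?_
  filter_upwards [hL.eventually_gt_atTop 0] with n hn
  rw [arsinh_div_eq (hh n)]
  have hne : Real.log (h n) ≠ 0 := fun h0 => by simp [h0] at hn
  field_simp
  ring

/-- The logarithmic blow-up behind the second-order selection: on the scale `log (1 / h)`,
`arsinh (z / h)` only remembers the sign of `z`. -/
lemma tendsto_arsinh_div_log {h z : ℕ → ℝ} {z₀ : ℝ} (hh : ∀ n, 0 < h n)
    (hlim : Tendsto h atTop (𝓝 0)) (hz : Tendsto z atTop (𝓝 z₀)) (hz₀ : z₀ ≠ 0) :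
    Tendsto (fun n => Real.arsinh (z n / h n) / -Real.log (h n)) atTop (𝓝 (sgn z₀)) := by
  unfold sgn
  rcases lt_or_gt_of_ne hz₀ with h0 | h0
  · rw [if_neg (not_le.2 h0)]
    refine (tendsto_arsinh_div_log_of_pos hh hlim hz.neg (neg_pos.2 h0)).neg.congr fun n => ?_
    rw [neg_div, Real.arsinh_neg]
    ring
  · rw [if_pos h0.le]
    exact tendsto_arsinh_div_log_of_pos hh hlim hz h0

lemma abs_arsinh_le (y : ℝ) : |Real.arsinh y| ≤ Real.log (1 + 2 * |y|) := by
  have key : ∀ y : ℝ, 0 ≤ y → |Real.arsinh y| ≤ Real.log (1 + 2 * |y|) := fun y hy => by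
    rw [abs_of_nonneg (Real.arsinh_nonneg_iff.2 hy), abs_of_nonneg hy, Real.arsinh]
    have : √(1 + y ^ 2) ≤ 1 + y := by
      rw [Real.sqrt_le_left (by linarith)]
      nlinarith
    exact Real.log_le_log (by positivity) (by linarith)
  rcases le_total 0 y with hy | hy
  · exact key y hy
  · simpa [Real.arsinh_neg] using key (-y) (by linarith)

/-- Uniform domination for the rescaled inner integrals. -/
lemma mul_arsinh_div_log_le {h r z R K : ℝ} (hh : 0 < h) (hL : 1 ≤ -Real.log h) (hr : 0 < r)
    (hrR : r ≤ R) (hzK : |z| ≤ K) :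
    r * |Real.arsinh (z / (r * h)) / -Real.log h| ≤ 2 * R + 2 * K := by
  have hK : 0 ≤ K := (abs_nonneg z).trans hzK
  have hh1 : h ≤ 1 := by
    by_contra! hcon
    linarith [Real.log_pos hcon]
  have hR : 0 < R := hr.trans_le hrR
  have h1 : |Real.arsinh (z / (r * h))| ≤ (R + 2 * K) / r + -Real.log h := by
    calc |Real.arsinh (z / (r * h))| ≤ Real.log (1 + 2 * |z / (r * h)|) := abs_arsinh_le _
      _ ≤ Real.log ((R + 2 * K) / r / h) := by
        apply Real.log_le_log (by positivity)
        rw [abs_div, abs_of_pos (mul_pos hr hh), div_div, le_div_iff₀ (by positivity)]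
        have : (1 + 2 * (|z| / (r * h))) * (r * h) = r * h + 2 * |z| := by
          field_simp
        rw [this]
        nlinarith
      _ = Real.log ((R + 2 * K) / r) + -Real.log h := by
        rw [Real.log_div (by positivity) hh.ne']; ring
      _ ≤ _ := by
        have := Real.log_le_self (x := (R + 2 * K) / r) (by positivity)
        linarith
  rw [abs_div, abs_of_pos (by linarith : 0 < -Real.log h), ← mul_div_assoc,
    div_le_iff₀ (by linarith)]
  calc r * |Real.arsinh (z / (r * h))| ≤ r * ((R + 2 * K) / r + -Real.log h) := by gcongr
    _ = R + 2 * K + r * -Real.log h := by field_simp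
    _ ≤ (2 * R + 2 * K) * -Real.log h := by nlinarith

/-! ### Second order: the derivative along the level line -/

/-- The first-order quantity in the direction along which the degenerate functional is constant:
`h⁻²` times the derivative of the mean distance when the point moves along the level line
`p s + q t = x`, evaluated at first coordinate `σ'` (with reversed sign). -/
def moment (p q h x σ' : ℝ) : ℝ :=
  ∫ z in refTri, (z.1 - σ') / √((p * z.1 + q * z.2 - x) ^ 2 + h ^ 2 * (z.1 - σ') ^ 2)

lemma abs_div_sqrt_le {h : ℝ} (hh : 0 < h) (y w : ℝ) :
    |w / √(y ^ 2 + h ^ 2 * w ^ 2)| ≤ 1 / h := by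
  rw [abs_div, abs_of_nonneg (Real.sqrt_nonneg _)]
  have h1 : h * |w| ≤ √(y ^ 2 + h ^ 2 * w ^ 2) := by
    apply Real.le_sqrt_of_sq_le
    rw [mul_pow, sq_abs]
    nlinarith [sq_nonneg y]
  apply div_le_of_le_mul₀ (Real.sqrt_nonneg _) (by positivity)
  calc |w| = 1 / h * (h * |w|) := by field_simp
    _ ≤ _ := by gcongr

lemma integrableOn_moment (p q x σ' : ℝ) {h : ℝ} (hh : 0 < h) :
    IntegrableOn (fun z : ℝ × ℝ =>
      (z.1 - σ') / √((p * z.1 + q * z.2 - x) ^ 2 + h ^ 2 * (z.1 - σ') ^ 2)) refTri :=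
  integrableOn_refTri_of_bound (by fun_prop) (1 / h) fun z _ => abs_div_sqrt_le hh _ _

lemma moment_eq (p x σ' : ℝ) {q h : ℝ} (hq : 0 < q) (hh : 0 < h) :
    q * moment p q h x σ' = ∫ s in (0 : ℝ)..1, (s - σ') *
      (Real.arsinh ((q * (1 - s) + (p * s - x)) / (|s - σ'| * h)) -
        Real.arsinh ((p * s - x) / (|s - σ'| * h))) := by
  unfold moment
  rw [integral_refTri (integrableOn_moment p q x σ' hh), ← intervalIntegral.integral_const_mul]
  congr 1
  ext s
  rcases eq_or_ne s σ' with rfl | hs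
  · simp
  · have := integral_inv_sqrt hq (mul_pos (abs_pos.2 (sub_ne_zero.2 hs)) hh) (p * s - x) (1 - s)
    rw [mul_pow, sq_abs] at this
    have h2 : ∀ t, (s - σ') / √((p * s + q * t - x) ^ 2 + h ^ 2 * (s - σ') ^ 2) =
        (s - σ') * (√((q * t + (p * s - x)) ^ 2 + (s - σ') ^ 2 * h ^ 2))⁻¹ := fun t => by
      rw [div_eq_mul_inv]
      congr 4 <;> ring
    simp only [h2]
    rw [intervalIntegral.integral_const_mul, this]
    field_simp

/-- The sign function cuts the integral down to the chord `0 ≤ s ≤ β / a`, where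
`sgn (β - a s) - -1 = 2`. -/
lemma integral_limit {β a : ℝ} (hβ : 0 < β) (hβa : β ≤ a) (σ' : ℝ) :
    ∫ s in (0 : ℝ)..1, (s - σ') * (sgn (β - a * s) - -1) =
      2 * (β / a) * (β / (2 * a) - σ') := by
  have ha : 0 < a := hβ.trans_le hβa
  have hs0 : 0 < β / a := by positivity
  have hs1 : β / a ≤ 1 := (div_le_one ha).2 hβa
  have e1 : EqOn (fun s => (s - σ') * (sgn (β - a * s) - -1)) (fun s => 2 * (s - σ'))
      (Ioo 0 (β / a)) := by
    intro s hs
    have : s * a < β := (lt_div_iff₀ ha).1 hs.2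
    simp only [sgn]
    rw [if_pos (by linarith)]
    ring
  have e2 : EqOn (fun s => (s - σ') * (sgn (β - a * s) - -1)) (fun s => 0)
      (Ioo (β / a) 1) := by
    intro s hs
    have : β < s * a := (div_lt_iff₀ ha).1 hs.1
    simp only [sgn]
    rw [if_neg (by linarith)]
    ring
  have i1 : IntervalIntegrable (fun s => (s - σ') * (sgn (β - a * s) - -1)) volume 0 (β / a) := by
    rw [intervalIntegrable_congr_uIoo (by rwa [uIoo_of_le hs0.le])]
    apply Continuous.intervalIntegrable; fun_prop
  have i2 : IntervalIntegrable (fun s => (s - σ') * (sgn (β - a * s) - -1)) volume (β / a) 1 := by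
    rw [intervalIntegrable_congr_uIoo (by rwa [uIoo_of_le hs1])]
    simp
  rw [← intervalIntegral.integral_add_adjacent_intervals i1 i2,
    intervalIntegral.integral_congr_Ioo_of_le hs0.le e1,
    intervalIntegral.integral_congr_Ioo_of_le hs1 e2, intervalIntegral.integral_const_mul,
    intervalIntegral.integral_sub (by simp) (by simp), integral_id]
  simp
  field_simp

/-- On the scale `log (1 / h)`, `moment` at `σ'` converges to a positive multiple of
`β / (2 (b + c)) - σ'`, the first coordinate of the midpoint of the chord minus `σ'`. -/
lemma tendsto_moment {b c β : ℝ} (hc : 0 < c) (hcb : c ≤ b) (hβ0 : 0 < β)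
    (hβb : β ≤ b) {p q h x : ℕ → ℝ}
    (hp : Tendsto p atTop (𝓝 (-c))) (hq : Tendsto q atTop (𝓝 b)) (hq0 : ∀ n, 0 < q n)
    (hh : Tendsto h atTop (𝓝 0)) (hh0 : ∀ n, 0 < h n) (hx : Tendsto x atTop (𝓝 (b - β)))
    (σ' : ℝ) :
    Tendsto (fun n => q n * moment (p n) (q n) (h n) (x n) σ' / -Real.log (h n)) atTop
      (𝓝 (2 * (β / (b + c)) * (β / (2 * (b + c)) - σ'))) := by
  have hb : 0 < b := hc.trans_le hcb
  rw [← integral_limit hβ0 (by linarith : β ≤ b + c) σ']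
  have hL := tendsto_neg_log hh0 hh
  simp only [moment_eq _ _ _ (hq0 _) (hh0 _)]
  simp only [← intervalIntegral.integral_div]
  set K := b + c + |b - β| + 3 with hK
  set R := 1 + |σ'| with hR
  refine intervalIntegral.tendsto_integral_filter_of_dominated_convergence
    (fun _ => 2 * (2 * R + 2 * K)) ?_ ?_ (by simp) ?_
  · refine Eventually.of_forall fun n => Measurable.aestronglyMeasurable ?_
    have := Real.continuous_arsinh.measurable
    refine Measurable.div_const (Measurable.mul (by fun_prop) (Measurable.sub ?_ ?_)) _
    · exact this.comp (by fun_prop)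
    · exact this.comp (by fun_prop)
  · filter_upwards [hL.eventually_ge_atTop 1, hp.abs.eventually_lt_const (lt_add_one _),
      hq.abs.eventually_lt_const (lt_add_one _), hx.abs.eventually_lt_const (lt_add_one _)]
      with n hn hpn hqn hxn
    refine ae_of_all _ fun s hs => ?_
    rw [uIoc_of_le zero_le_one] at hs
    rw [abs_neg, abs_of_pos hc] at hpn
    rw [abs_of_pos hb] at hqn
    have hps : |p n * s| ≤ |p n| := by
      rw [abs_mul, abs_of_pos hs.1]
      exact mul_le_of_le_one_right (abs_nonneg _) hs.2
    have hqs : |q n * (1 - s)| ≤ |q n| := by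
      rw [abs_mul, abs_of_nonneg (by linarith [hs.2] : 0 ≤ 1 - s)]
      exact mul_le_of_le_one_right (abs_nonneg _) (by linarith [hs.1])
    have hz0 : |p n * s - x n| ≤ K := by
      have := abs_sub (p n * s) (x n)
      linarith
    have hz1 : |q n * (1 - s) + (p n * s - x n)| ≤ K := by
      have := abs_sub (p n * s) (x n)
      have := abs_add_le (q n * (1 - s)) (p n * s - x n)
      linarith
    rcases eq_or_ne s σ' with rfl | hsσ
    · simp only [sub_self, zero_mul, zero_div, norm_zero]
      have := abs_nonneg s
      have := abs_nonneg (b - β)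
      positivity
    have hr : 0 < |s - σ'| := abs_pos.2 (sub_ne_zero.2 hsσ)
    have hrR : |s - σ'| ≤ R := by
      have := abs_sub s σ'
      rw [abs_of_pos hs.1] at this
      linarith [hs.2]
    have b0 := mul_arsinh_div_log_le (hh0 n) hn hr hrR hz0
    have b1 := mul_arsinh_div_log_le (hh0 n) hn hr hrR hz1
    rw [Real.norm_eq_abs, mul_div_assoc, abs_mul, sub_div]
    calc _ ≤ |s - σ'| * (_ + _) := by gcongr; exact abs_sub _ _
      _ ≤ _ := by rw [mul_add]; linarith
  · have hne : ∀ᵐ s : ℝ, s ≠ σ' ∧ s ≠ β / (b + c) := by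
      have h1 : ∀ y : ℝ, ∀ᵐ s : ℝ, s ≠ y := fun y => by
        simp [ae_iff]
      exact (h1 _).and (h1 _)
    filter_upwards [hne] with s hs hs01
    rw [uIoc_of_le zero_le_one] at hs01
    have hr : 0 < |s - σ'| := abs_pos.2 (sub_ne_zero.2 hs.1)
    have hz0 : Tendsto (fun n => (p n * s - x n) / |s - σ'|) atTop
        (𝓝 ((-c * s - (b - β)) / |s - σ'|)) := ((hp.mul_const s).sub hx).div_const _
    have hz1 : Tendsto (fun n => (q n * (1 - s) + (p n * s - x n)) / |s - σ'|) atTop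
        (𝓝 ((b * (1 - s) + (-c * s - (b - β))) / |s - σ'|)) :=
      ((hq.mul_const _).add ((hp.mul_const s).sub hx)).div_const _
    have n0 : (-c * s - (b - β)) / |s - σ'| < 0 :=
      div_neg_of_neg_of_pos (by nlinarith [hs01.1]) hr
    have ez : b * (1 - s) + (-c * s - (b - β)) = β - (b + c) * s := by ring
    have n1 : β - (b + c) * s ≠ 0 := fun h => hs.2 (by
      rw [eq_div_iff (by positivity)]; linarith)
    have t0 := tendsto_arsinh_div_log hh0 hh hz0 n0.ne
    rw [ez] at hz1
    have t1 := tendsto_arsinh_div_log hh0 hh hz1 (div_ne_zero n1 hr.ne')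
    have s0 : sgn ((-c * s - (b - β)) / |s - σ'|) = -1 := if_neg (not_le.2 n0)
    have s1 : sgn ((β - (b + c) * s) / |s - σ'|) = sgn (β - (b + c) * s) := by
      simp only [sgn, le_div_iff₀ hr, zero_mul]
    rw [s0] at t0
    rw [s1] at t1
    refine ((t1.sub t0).const_mul (s - σ')).congr fun n => ?_
    rw [div_div, div_div]
    ring

/-! ### Minimizers in affine coordinates -/

/-- The tangent-line inequality for the convex function `w ↦ √(y² + h² w²)`. It also holds at
`y = h w₀ = 0`, where the quotient is `0`. -/
lemma sqrt_tangent (y h w₀ w₁ : ℝ) :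
    √(y ^ 2 + h ^ 2 * w₀ ^ 2) + h ^ 2 * (w₁ - w₀) * (w₀ / √(y ^ 2 + h ^ 2 * w₀ ^ 2)) ≤
      √(y ^ 2 + h ^ 2 * w₁ ^ 2) := by
  rcases (Real.sqrt_nonneg (y ^ 2 + h ^ 2 * w₀ ^ 2)).eq_or_lt with h0 | h0
  · rw [← h0]
    simp
  · have hsq0 := Real.sq_sqrt (by positivity : 0 ≤ y ^ 2 + h ^ 2 * w₀ ^ 2)
    have hsq1 := Real.sq_sqrt (by positivity : 0 ≤ y ^ 2 + h ^ 2 * w₁ ^ 2)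
    have hcs : y ^ 2 + h ^ 2 * w₀ * w₁ ≤
        √(y ^ 2 + h ^ 2 * w₀ ^ 2) * √(y ^ 2 + h ^ 2 * w₁ ^ 2) := by
      rw [← Real.sqrt_mul (by positivity)]
      apply Real.le_sqrt_of_sq_le
      nlinarith [sq_nonneg (y * h * (w₀ - w₁))]
    set S := √(y ^ 2 + h ^ 2 * w₀ ^ 2)
    rw [← mul_div_assoc, ← le_sub_iff_add_le', div_le_iff₀ h0]
    nlinarith

/-- The area functional in affine coordinates, for the quadratic form
`(p s + q t)² + h² s²` on the reference triangle. -/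
def coordDist (p q h σ τ : ℝ) : ℝ :=
  ∫ z in refTri, √((p * (z.1 - σ) + q * (z.2 - τ)) ^ 2 + h ^ 2 * (z.1 - σ) ^ 2)

lemma integrableOn_coordDist (p q h σ τ : ℝ) : IntegrableOn (fun z : ℝ × ℝ =>
    √((p * (z.1 - σ) + q * (z.2 - τ)) ^ 2 + h ^ 2 * (z.1 - σ) ^ 2)) refTri :=
  integrableOn_refTri_of_continuous (by fun_prop)

/-- The first coordinate of a minimizer lies on the side of `σ'` prescribed by the sign of
`moment` at `σ'`: compare the minimizer with the point of first coordinate `σ'` on its level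
line. -/
lemma moment_sign {p q h σ τ : ℝ} (hq : 0 < q) (hh : 0 < h)
    (hmin : ∀ σ' τ', coordDist p q h σ τ ≤ coordDist p q h σ' τ') (σ' : ℝ) :
    (σ' - σ) * moment p q h (p * σ + q * τ) σ' ≤ 0 := by
  -- the point with first coordinate `σ'` on the level line of `p s + q t` through `(σ, τ)`
  set τ' := τ + p * (σ - σ') / q with hτ'
  have hlev : p * σ' + q * τ' = p * σ + q * τ := by
    rw [hτ']; field_simp; ring
  have hm := (integrableOn_moment p q (p * σ + q * τ) σ' hh).const_mul (h ^ 2 * (σ' - σ))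
  have hle : ∫ z in refTri,
      (√((p * (z.1 - σ') + q * (z.2 - τ')) ^ 2 + h ^ 2 * (z.1 - σ') ^ 2) + h ^ 2 * (σ' - σ) *
        ((z.1 - σ') / √((p * z.1 + q * z.2 - (p * σ + q * τ)) ^ 2 + h ^ 2 * (z.1 - σ') ^ 2))) ≤
      coordDist p q h σ τ := by
    refine integral_mono ((integrableOn_coordDist p q h σ' τ').add hm)
      (integrableOn_coordDist p q h σ τ) fun z => ?_
    have := sqrt_tangent (p * z.1 + q * z.2 - (p * σ + q * τ)) h (z.1 - σ') (z.1 - σ)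
    simp only
    rw [show p * (z.1 - σ') + q * (z.2 - τ') = p * z.1 + q * z.2 - (p * σ + q * τ) by
      linear_combination -hlev,
      show p * (z.1 - σ) + q * (z.2 - τ) = p * z.1 + q * z.2 - (p * σ + q * τ) by ring]
    rwa [show z.1 - σ - (z.1 - σ') = σ' - σ by ring] at this
  rw [integral_add (integrableOn_coordDist p q h σ' τ') hm, integral_const_mul] at hle
  have h1 := hmin σ' τ'
  have h2 : h ^ 2 * ((σ' - σ) * moment p q h (p * σ + q * τ) σ') ≤ 0 := by
    unfold coordDist moment at *
    linarith
  have : 0 < h ^ 2 := by positivity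
  nlinarith

/-- A minimizer for the nearly degenerate form is an approximate minimizer of the limit
functional after projection. -/
lemma lineDist_le {p q h σ τ : ℝ} (b c : ℝ) (hq : 0 < q) (hh : 0 < h)
    (hmin : ∀ σ' τ', coordDist p q h σ τ ≤ coordDist p q h σ' τ') (x' : ℝ) :
    lineDist b c (p * σ + q * τ) ≤
      lineDist b c x' + (2 * |p - -c| + 2 * |q - b| + h) * volume.real refTri := by
  have hline : ∀ y, IntegrableOn (fun z : ℝ × ℝ => |-c * z.1 + b * z.2 - y|) refTri := fun y =>
    integrableOn_refTri_of_continuous (by fun_prop)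
  have hconst : ∀ C : ℝ, IntegrableOn (fun _ : ℝ × ℝ => C) refTri := fun C =>
    integrableOn_refTri_of_continuous continuous_const
  have hpert : ∀ z ∈ refTri, |(p * z.1 + q * z.2) - (-c * z.1 + b * z.2)| ≤
      |p - -c| + |q - b| := fun z hz => by
    have hz' := refTri_subset hz
    have e : (p * z.1 + q * z.2) - (-c * z.1 + b * z.2) = (p - -c) * z.1 + (q - b) * z.2 := by
      ring
    rw [e]
    refine (abs_add_le _ _).trans (add_le_add ?_ ?_)
    · rw [abs_mul, abs_of_nonneg hz'.1.1]
      exact mul_le_of_le_one_right (abs_nonneg _) hz'.1.2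
    · rw [abs_mul, abs_of_nonneg hz'.2.1]
      exact mul_le_of_le_one_right (abs_nonneg _) hz'.2.2
  have h1 : lineDist b c (p * σ + q * τ) ≤
      coordDist p q h σ τ + (|p - -c| + |q - b|) * volume.real refTri := by
    have : lineDist b c (p * σ + q * τ) ≤ ∫ z in refTri,
        (√((p * (z.1 - σ) + q * (z.2 - τ)) ^ 2 + h ^ 2 * (z.1 - σ) ^ 2) +
          (|p - -c| + |q - b|)) := by
      refine setIntegral_mono_on (hline _) ((integrableOn_coordDist p q h σ τ).add (hconst _))
        refTri_measurableSet fun z hz => ?_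
      have a1 : |p * (z.1 - σ) + q * (z.2 - τ)| ≤
          √((p * (z.1 - σ) + q * (z.2 - τ)) ^ 2 + h ^ 2 * (z.1 - σ) ^ 2) :=
        Real.abs_le_sqrt (by nlinarith [sq_nonneg (h * (z.1 - σ))])
      have a2 := abs_sub_abs_le_abs_sub (-c * z.1 + b * z.2 - (p * σ + q * τ))
        (p * (z.1 - σ) + q * (z.2 - τ))
      have a3 := hpert z hz
      rw [abs_sub_comm, show -c * z.1 + b * z.2 - (p * z.1 + q * z.2) =
        -c * z.1 + b * z.2 - (p * σ + q * τ) - (p * (z.1 - σ) + q * (z.2 - τ)) by ring] at a3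
      linarith
    rw [integral_add (integrableOn_coordDist p q h σ τ) (hconst _), setIntegral_const,
      smul_eq_mul, mul_comm (volume.real _)] at this
    exact this
  -- the comparison point on the line `p s + q t = x'` with `s = 0`
  have h2 : coordDist p q h 0 (x' / q) ≤
      lineDist b c x' + (|p - -c| + |q - b| + h) * volume.real refTri := by
    have : coordDist p q h 0 (x' / q) ≤ ∫ z in refTri,
        (|-c * z.1 + b * z.2 - x'| + (|p - -c| + |q - b| + h)) := by
      refine setIntegral_mono_on (integrableOn_coordDist p q h 0 (x' / q))
        ((hline _).add (hconst _)) refTri_measurableSet fun z hz => ?_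
      have hz' := refTri_subset hz
      have e : p * (z.1 - 0) + q * (z.2 - x' / q) = p * z.1 + q * z.2 - x' := by
        field_simp; ring
      rw [e, sub_zero]
      have a1 : √((p * z.1 + q * z.2 - x') ^ 2 + h ^ 2 * z.1 ^ 2) ≤
          |p * z.1 + q * z.2 - x'| + h := by
        rw [Real.sqrt_le_left (by positivity)]
        have : h ^ 2 * z.1 ^ 2 ≤ h ^ 2 := by
          have : z.1 ^ 2 ≤ 1 := pow_le_one₀ hz'.1.1 hz'.1.2
          nlinarith [sq_nonneg h]
        have := mul_nonneg (abs_nonneg (p * z.1 + q * z.2 - x')) hh.le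
        have := sq_abs (p * z.1 + q * z.2 - x')
        nlinarith
      have a2 := abs_sub_abs_le_abs_sub (p * z.1 + q * z.2 - x') (-c * z.1 + b * z.2 - x')
      have a3 := hpert z hz
      rw [show p * z.1 + q * z.2 - (-c * z.1 + b * z.2) =
        p * z.1 + q * z.2 - x' - (-c * z.1 + b * z.2 - x') by ring] at a3
      linarith
    rw [integral_add (hline _) (hconst _), setIntegral_const, smul_eq_mul,
      mul_comm (volume.real _)] at this
    exact this
  have h3 := hmin 0 (x' / q)
  nlinarith

/-- Convergence of the minimizers in affine coordinates: the projected minimizer tends to the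
median `b - β` of the projected area, and its first coordinate to that of the midpoint of the chord
`{-c s + b t = b - β}` of the reference triangle, which runs from `s = 0` to `s = β / (b + c)`. -/
lemma tendsto_coord {b c β : ℝ} (hc : 0 < c) (hcb : c ≤ b) (hβ0 : 0 < β)
    (hβ : β ^ 2 = (b + c) * b / 2) {p q h σ τ : ℕ → ℝ}
    (hp : Tendsto p atTop (𝓝 (-c))) (hq : Tendsto q atTop (𝓝 b)) (hq0 : ∀ n, 0 < q n)
    (hh : Tendsto h atTop (𝓝 0)) (hh0 : ∀ n, 0 < h n)
    (hmin : ∀ n σ' τ', coordDist (p n) (q n) (h n) (σ n) (τ n) ≤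
      coordDist (p n) (q n) (h n) σ' τ') :
    Tendsto σ atTop (𝓝 (β / (2 * (b + c)))) ∧
      Tendsto τ atTop (𝓝 ((b - β + c * (β / (2 * (b + c)))) / b)) := by
  have hb : 0 < b := hc.trans_le hcb
  have hβb : β ≤ b := by nlinarith
  have hx : Tendsto (fun n => p n * σ n + q n * τ n) atTop (𝓝 (b - β)) := by
    refine tendsto_of_lineDist hc hcb hβ0 hβ fun x' => ⟨_, ?_, fun n =>
      lineDist_le b c (hq0 n) (hh0 n) (hmin n) x'⟩
    have h1 := (((hp.sub_const (-c)).abs.const_mul 2).add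
      ((hq.sub_const b).abs.const_mul 2)).add hh
    simpa using h1.mul_const (volume.real refTri)
  have hL := tendsto_neg_log hh0 hh
  have hfac : 0 < 2 * (β / (b + c)) := by positivity
  have hσ : Tendsto σ atTop (𝓝 (β / (2 * (b + c)))) := by
    rw [tendsto_order]
    constructor
    · intro y hy
      obtain ⟨σ', h1, h2⟩ := exists_between hy
      have hT := tendsto_moment hc hcb hβ0 hβb hp hq hq0 hh hh0 hx σ'
      filter_upwards [hT.eventually_const_lt (mul_pos hfac (sub_pos.2 h2)),
        hL.eventually_gt_atTop 0] with n hn hLn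
      have hm := moment_sign (hq0 n) (hh0 n) (hmin n) σ'
      have : 0 < moment (p n) (q n) (h n) (p n * σ n + q n * τ n) σ' :=
        pos_of_mul_pos_right ((div_pos_iff_of_pos_right hLn).1 hn) (hq0 n).le
      by_contra! hcon
      nlinarith
    · intro y hy
      obtain ⟨σ', h1, h2⟩ := exists_between hy
      have hT := tendsto_moment hc hcb hβ0 hβb hp hq hq0 hh hh0 hx σ'
      filter_upwards [hT.eventually_lt_const (mul_neg_of_pos_of_neg hfac (sub_neg.2 h1)),
        hL.eventually_gt_atTop 0] with n hn hLn
      have hm := moment_sign (hq0 n) (hh0 n) (hmin n) σ'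
      have : moment (p n) (q n) (h n) (p n * σ n + q n * τ n) σ' < 0 := by
        by_contra! hcon
        have := hq0 n
        exact absurd hn (not_lt.2 (by positivity))
      by_contra! hcon
      nlinarith
  refine ⟨hσ, ?_⟩
  have h1 := (hx.sub (hp.mul hσ)).div hq hb.ne'
  rw [show b - β - -c * (β / (2 * (b + c))) = b - β + c * (β / (2 * (b + c))) by ring] at h1
  refine h1.congr fun n => ?_
  have := (hq0 n).ne'
  simp only [Pi.div_apply]
  field_simp
  ring

/-- Completing the square in `‖s u + t v‖²`: the first square is the component along `v`, the
second one the component across `v`. -/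
lemma norm_comb_eq (u v : Plane) (hv : v ≠ 0) (s t : ℝ) :
    ‖s • u + t • v‖ = √((inner ℝ u v / ‖v‖ * s + ‖v‖ * t) ^ 2 +
      √(‖u‖ ^ 2 - (inner ℝ u v / ‖v‖) ^ 2) ^ 2 * s ^ 2) := by
  have hv0 : 0 < ‖v‖ := norm_pos_iff.2 hv
  have hcs : 0 ≤ ‖u‖ ^ 2 - (inner ℝ u v / ‖v‖) ^ 2 := by
    rw [sub_nonneg, sq_le_sq, abs_norm, abs_div, abs_norm, div_le_iff₀ hv0]
    exact abs_real_inner_le_norm u v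
  rw [Real.sq_sqrt hcs]
  symm
  rw [Real.sqrt_eq_iff_mul_self_eq (by positivity) (norm_nonneg _), ← sq, norm_add_sq_real,
    norm_smul, norm_smul, inner_smul_left, inner_smul_right, mul_pow, mul_pow, Real.norm_eq_abs,
    Real.norm_eq_abs, sq_abs, sq_abs]
  simp only [conj_trivial]
  field_simp
  ring

end Auxiliary

/-- For a degenerate triangle there is a well-defined triple of barycentric coordinates
of the geometric median of the triangular region: the barycentric coordinates of the
medians of any approximating sequence of nondegenerate triangles converge to it, and
the limit does not depend on the approximating sequence. -/
theorem median_area_degenerate_limit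
    (a b c : ℝ) (hba : b ≤ a) (hcb : c ≤ b) (hc : 0 < c) (habc : a = b + c)
    (A B C : Plane) (hcfg : DegenConfig a b c A B C) :
    ∃ l1 l2 l3 : ℝ, l1 + l2 + l3 = 1 ∧
      ∀ (An Bn Cn : ℕ → Plane),
        (∀ n, AffineIndependent ℝ ![An n, Bn n, Cn n]) →
        Tendsto An atTop (nhds A) → Tendsto Bn atTop (nhds B) →
        Tendsto Cn atTop (nhds C) →
        ∀ mn : ℕ → Plane,
          (∀ n, ∀ X : Plane,
            areaDist (An n) (Bn n) (Cn n) (mn n) ≤ areaDist (An n) (Bn n) (Cn n) X) →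
          ∀ μ1 μ2 μ3 : ℕ → ℝ,
            (∀ n, μ1 n + μ2 n + μ3 n = 1) →
            (∀ n, mn n = μ1 n • An n + μ2 n • Bn n + μ3 n • Cn n) →
            Tendsto μ1 atTop (nhds l1) ∧ Tendsto μ2 atTop (nhds l2) ∧
              Tendsto μ3 atTop (nhds l3) := by
  obtain ⟨-, hBC, hCA, hAB⟩ := hcfg
  have hb : 0 < b := hc.trans_le hcb
  set β := √((b + c) * b / 2) with hβdef
  have hβ0 : 0 < β := Real.sqrt_pos.2 (by positivity)
  have hβ : β ^ 2 = (b + c) * b / 2 := Real.sq_sqrt (by positivity)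
  set l2 := β / (2 * (b + c)) with hl2
  set l3 := (b - β + c * l2) / b with hl3
  refine ⟨1 - l2 - l3, l2, l3, by ring, ?_⟩
  intro An Bn Cn hind hA hB hC mn hmin μ1 μ2 μ3 hμ hm
  have hv : ∀ n, Cn n - An n ≠ 0 := fun n h0 => by
    have := (linIndep_of_affineIndep (hind n) 0 1 (by simp [h0])).2
    norm_num at this
  have hu : Tendsto (fun n => Bn n - An n) atTop (nhds (B - A)) := hB.sub hA
  have hv' : Tendsto (fun n => Cn n - An n) atTop (nhds (C - A)) := hC.sub hA
  have hBA : ‖B - A‖ = c := by rw [norm_sub_rev, hAB]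
  -- equality in the triangle inequality: `B - A` and `C - A` point in opposite directions
  have hinner : inner ℝ (B - A) (C - A) = -c * b := by
    have := norm_sub_sq_real (B - A) (C - A)
    rw [sub_sub_sub_cancel_right, hBC, hBA, hCA, habc] at this
    linarith
  set p : ℕ → ℝ := fun n => inner ℝ (Bn n - An n) (Cn n - An n) / ‖Cn n - An n‖ with hpdef
  set q : ℕ → ℝ := fun n => ‖Cn n - An n‖ with hqdef
  set h : ℕ → ℝ := fun n => √(‖Bn n - An n‖ ^ 2 - p n ^ 2) with hhdef
  have hnorm : ∀ n s t, ‖s • (Bn n - An n) + t • (Cn n - An n)‖ =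
      √((p n * s + q n * t) ^ 2 + h n ^ 2 * s ^ 2) := fun n s t => norm_comb_eq _ _ (hv n) s t
  have hq0 : ∀ n, 0 < q n := fun n => norm_pos_iff.2 (hv n)
  have hq : Tendsto q atTop (nhds b) := by
    rw [← hCA]; exact hv'.norm
  have hp : Tendsto p atTop (nhds (-c)) := by
    have := (hu.inner (𝕜 := ℝ) hv').div hv'.norm (by rw [hCA]; exact hb.ne')
    rwa [hinner, hCA, mul_div_cancel_right₀ _ hb.ne'] at this
  have hh : Tendsto h atTop (nhds 0) := by
    have := ((hu.norm.pow 2).sub (hp.pow 2)).sqrt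
    rwa [hBA, neg_sq, sub_self, Real.sqrt_zero] at this
  have hh0 : ∀ n, 0 < h n := fun n => by
    refine lt_of_le_of_ne (Real.sqrt_nonneg _) fun h0 => ?_
    -- if `h n = 0`, the quadratic form vanishes at `(1, -p / q)`
    have h1 := hnorm n 1 (-(p n / q n))
    have h2 : p n * 1 + q n * -(p n / q n) = 0 := by
      have := (hq0 n).ne'
      field_simp
      ring
    rw [h2, ← h0] at h1
    have h3 : (1 : ℝ) • (Bn n - An n) + (-(p n / q n)) • (Cn n - An n) = 0 :=
      norm_eq_zero.1 (h1.trans (by simp))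
    exact one_ne_zero (linIndep_of_affineIndep (hind n) _ _ h3).1
  have hcmin : ∀ n σ' τ', coordDist (p n) (q n) (h n) (μ2 n) (μ3 n) ≤
      coordDist (p n) (q n) (h n) σ' τ' := by
    intro n σ' τ'
    obtain ⟨k, hk, hkeq⟩ := areaDist_eq (hind n)
    have hmn : mn n = An n + (μ2 n • (Bn n - An n) + μ3 n • (Cn n - An n)) := by
      rw [hm n, show μ1 n = 1 - μ2 n - μ3 n by linarith [hμ n]]
      module
    have h1 := hmin n (An n + (σ' • (Bn n - An n) + τ' • (Cn n - An n)))
    rw [hmn, hkeq, hkeq, mul_le_mul_iff_right₀ hk] at h1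
    simp only [hnorm] at h1
    exact h1
  obtain ⟨h2, h3⟩ := tendsto_coord hc hcb hβ0 hβ hp hq hq0 hh hh0 hcmin
  refine ⟨?_, h2, h3⟩
  refine ((h2.const_sub 1).sub h3).congr fun n => ?_
  linarith [hμ n]
end
end
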